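/- arXiv:2412.14012 — 9 statements merged into one kernel-verified Lean document; each statement's English description precedes it below -/
import Mathlib

section
/- Let k be a field, let n ≥ 0, let X be a nilpotent endomorphism of V = k^n of Jordan type λ, and let 0 ≤ i ≤ n. Then every i-dimensional linear subspace W of V contains an X-invariant linear subspace U with dim U ≥ Σ_{j=n−i+1}^{n} λ_j (where λ_j = 0 for j beyond the length of λ). -/
/-!
Let `U` be the largest `X`-invariant subspace of `W`, namely `{x | ∀ m, X ^ m x ∈ W}`, let
`N = V / U` with the induced endomorphism `f`, and let `c = n - i` be the codimension of `W`.
Since `dim N = ∑ₘ (rank f ^ m - rank f ^ (m + 1))`, it suffices to bound each summand by the number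
of `j < c` with `m < l j`; summing over `m` then gives `dim N ≤ ∑_{j < c} l j`.

* `rank f ^ m - rank f ^ (m + 1) = dim (ker f ⊓ range (f ^ m)) ≤ dim ker f ≤ c`, because
  `ker f → V / W` is injective: if `X x ∈ U` and `x ∈ W`, then `x ∈ U`
  (`finrank_ker_mapQ_le`).
* `rank f ^ m - rank f ^ (m + 1) ≤ rank X ^ m - rank X ^ (m + 1) = #{j < n | m < l j}`, because
  `range (f ^ m) / range (f ^ (m + 1))` is a quotient of `range (X ^ m) / range (X ^ (m + 1))`
  (`finrank_map_add_le`).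

As `l` is antitone, the smaller of the two bounds is `#{j < c | m < l j}` (`le_card_filter`).
-/

open Finset

/-- `l` is a partition of `n`: weakly decreasing, parts beyond position `n` are zero,
and the parts sum to `n`. Parts are `0`-indexed: `λ_j = l (j - 1)` for `j ≥ 1`. -/
def IsPartition (n : ℕ) (l : ℕ → ℕ) : Prop :=
  Antitone l ∧ (∀ j, n ≤ j → l j = 0) ∧ ∑ j ∈ Finset.range n, l j = n

section LinearAlgebra

variable {k V E : Type*} [Field k] [AddCommGroup V] [Module k V]
  [AddCommGroup E] [Module k E]

/-- The largest `X`-invariant subspace of `W`. -/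
def invariantCore (X : V →ₗ[k] V) (W : Submodule k V) : Submodule k V :=
  ⨅ m : ℕ, W.comap (X ^ m)

theorem mem_invariantCore {X : V →ₗ[k] V} {W : Submodule k V} {x : V} :
    x ∈ invariantCore X W ↔ ∀ m : ℕ, (X ^ m) x ∈ W := by
  simp [invariantCore]

theorem invariantCore_le (X : V →ₗ[k] V) (W : Submodule k V) : invariantCore X W ≤ W :=
  fun _ hx => mem_invariantCore.1 hx 0

theorem invariantCore_le_comap (X : V →ₗ[k] V) (W : Submodule k V) :
    invariantCore X W ≤ (invariantCore X W).comap X := by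
  intro x hx
  rw [Submodule.mem_comap, mem_invariantCore]
  intro m
  have h := mem_invariantCore.1 hx (m + 1)
  rwa [pow_succ] at h

variable [FiniteDimensional k V]

theorem finrank_map_add_finrank_inf_ker (g : V →ₗ[k] E) (A : Submodule k V) :
    Module.finrank k (A.map g) + Module.finrank k (A ⊓ LinearMap.ker g : Submodule k V) =
      Module.finrank k A := by
  have h := LinearMap.finrank_range_add_finrank_ker (g.domRestrict A)
  rw [LinearMap.range_domRestrict, LinearMap.ker_domRestrict] at h
  rw [← h, ← Submodule.map_comap_subtype, Submodule.finrank_map_subtype_eq]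

/-- A linear map does not increase the codimension of one subspace in another. -/
theorem finrank_map_add_le (g : V →ₗ[k] E) {A B : Submodule k V} (hBA : B ≤ A) :
    Module.finrank k (A.map g) + Module.finrank k B ≤
      Module.finrank k (B.map g) + Module.finrank k A := by
  have hA := finrank_map_add_finrank_inf_ker g A
  have hB := finrank_map_add_finrank_inf_ker g B
  have h := Submodule.finrank_mono (inf_le_inf_right (LinearMap.ker g) hBA)
  omega

theorem finrank_range_pow_le (f : V →ₗ[k] V) (m : ℕ) :
    Module.finrank k (LinearMap.range (f ^ m)) ≤
      Module.finrank k (LinearMap.range (f ^ (m + 1))) + Module.finrank k (LinearMap.ker f) := by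
  have h := finrank_map_add_finrank_inf_ker f (LinearMap.range (f ^ m))
  have h' := Submodule.finrank_mono
    (inf_le_right : LinearMap.range (f ^ m) ⊓ LinearMap.ker f ≤ LinearMap.ker f)
  rw [← LinearMap.range_comp, ← Module.End.mul_eq_comp, ← pow_succ'] at h
  omega

/-- The kernel of the map induced by `X` on `V ⧸ invariantCore X W` embeds into `V ⧸ W`. -/
theorem finrank_ker_mapQ_le (X : V →ₗ[k] V) (W : Submodule k V) :
    Module.finrank k (LinearMap.ker ((invariantCore X W).mapQ (invariantCore X W) X
      (invariantCore_le_comap X W))) ≤ Module.finrank k (V ⧸ W) := by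
  set U := invariantCore X W with hU
  set K := LinearMap.ker (U.mapQ U X (invariantCore_le_comap X W)) with hK
  let g : (V ⧸ U) →ₗ[k] (V ⧸ W) := U.mapQ W LinearMap.id (invariantCore_le X W)
  have hinf : K ⊓ LinearMap.ker g = ⊥ := by
    rw [eq_bot_iff]
    rintro y ⟨hy1, hy2⟩
    obtain ⟨x, rfl⟩ := Submodule.Quotient.mk_surjective U y
    have hx1 : X x ∈ U := by
      have h : U.mapQ U X (invariantCore_le_comap X W) (Submodule.Quotient.mk x) = 0 := hy1
      rwa [Submodule.mapQ_apply, Submodule.Quotient.mk_eq_zero] at h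
    have hx2 : x ∈ W := by
      have h : g (Submodule.Quotient.mk x) = 0 := hy2
      rwa [Submodule.mapQ_apply, Submodule.Quotient.mk_eq_zero] at h
    rw [Submodule.mem_bot, Submodule.Quotient.mk_eq_zero, hU, mem_invariantCore]
    intro m
    cases m with
    | zero => exact hx2
    | succ m =>
      rw [pow_succ]
      exact mem_invariantCore.1 hx1 m
  have h := finrank_map_add_finrank_inf_ker g K
  rw [hinf, finrank_bot] at h
  have h' := Submodule.finrank_le (K.map g)
  rw [add_zero] at h
  exact h ▸ h'

end LinearAlgebra

theorem sum_tsub_eq_add_card (s : Finset ℕ) (l : ℕ → ℕ) (m : ℕ) :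
    ∑ j ∈ s, (l j - m) = ∑ j ∈ s, (l j - (m + 1)) + (s.filter (fun j => m < l j)).card := by
  rw [Finset.card_filter, ← Finset.sum_add_distrib]
  refine Finset.sum_congr rfl fun j _ => ?_
  split_ifs <;> omega

/-- For antitone `l`, the set `{j | m < l j}` is an initial segment, so its intersections with
`range c` and `range n` have cardinalities related by a minimum. -/
theorem le_card_filter {l : ℕ → ℕ} (hl : Antitone l) {a c n m : ℕ} (hc : a ≤ c)
    (hn : a ≤ ((Finset.range n).filter (fun j => m < l j)).card) :
    a ≤ ((Finset.range c).filter (fun j => m < l j)).card := by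
  by_cases h : ∀ j ∈ Finset.range c, m < l j
  · rwa [Finset.filter_true_of_mem h, Finset.card_range]
  · push Not at h
    obtain ⟨j₀, hj₀, hlj⟩ := h
    refine hn.trans (Finset.card_le_card fun j hj => ?_)
    simp only [Finset.mem_filter, Finset.mem_range] at hj hj₀ ⊢
    refine ⟨?_, hj.2⟩
    by_contra hcj
    have := hl (show j₀ ≤ j by omega)
    omega

theorem sum_card_filter_le (l : ℕ → ℕ) (c M : ℕ) :
    ∑ m ∈ Finset.range M, ((Finset.range c).filter (fun j => m < l j)).card ≤
      ∑ j ∈ Finset.range c, l j := by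
  simp_rw [Finset.card_filter]
  rw [Finset.sum_comm]
  refine Finset.sum_le_sum fun j _ => ?_
  rw [← Finset.card_filter]
  calc _ ≤ (Finset.range (l j)).card := Finset.card_le_card fun m hm => by
        simp only [Finset.mem_filter, Finset.mem_range] at hm ⊢
        exact hm.2
    _ = l j := Finset.card_range _

/-- A nilpotent endomorphism `X` of `V = k^n` of Jordan type `λ` (i.e.
`rank (X ^ m) = ∑_j max (λ_j - m) 0` for all `m ≥ 0`):
every `i`-dimensional subspace `W` of `V` contains an `X`-invariant subspace `U`
with `dim U ≥ ∑_{j = n - i + 1}^{n} λ_j`. -/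
theorem every_subspace_contains_invariant_subspace
    {k : Type*} [Field k] (n : ℕ) (l : ℕ → ℕ) (hl : IsPartition n l)
    (X : (Fin n → k) →ₗ[k] (Fin n → k)) (hnil : IsNilpotent X)
    (hX : ∀ m : ℕ, Module.finrank k (LinearMap.range (X ^ m)) =
      ∑ j ∈ Finset.range n, (l j - m))
    (i : ℕ) (hin : i ≤ n) (W : Submodule k (Fin n → k))
    (hW : Module.finrank k W = i) :
    ∃ U : Submodule k (Fin n → k), U ≤ W ∧ (∀ x ∈ U, X x ∈ U) ∧
      ∑ j ∈ Finset.Ico (n - i) n, l j ≤ Module.finrank k U := by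
  obtain ⟨hanti, -, hsum⟩ := hl
  refine ⟨invariantCore X W, invariantCore_le X W, invariantCore_le_comap X W, ?_⟩
  have hker := finrank_ker_mapQ_le X W
  set U := invariantCore X W with hU
  set f := U.mapQ U X (invariantCore_le_comap X W) with hf
  have hWq := Submodule.finrank_quotient_add_finrank W
  have hUq := Submodule.finrank_quotient_add_finrank U
  rw [Module.finrank_fin_fun] at hWq hUq
  have hcomm : ∀ m x, (f ^ m) (U.mkQ x) = U.mkQ ((X ^ m) x) := by
    intro m
    induction m with
    | zero => intro x; rfl
    | succ m ih =>
      intro x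
      rw [pow_succ, pow_succ, Module.End.mul_apply, Module.End.mul_apply, ← ih]
      rfl
  have hrange : ∀ m, LinearMap.range (f ^ m) = (LinearMap.range (X ^ m)).map U.mkQ := by
    intro m
    have h : (f ^ m) ∘ₗ U.mkQ = U.mkQ ∘ₗ (X ^ m) := LinearMap.ext (hcomm m)
    rw [← LinearMap.range_comp, ← h, LinearMap.range_comp, Submodule.range_mkQ,
      LinearMap.range_eq_map]
  have hstep : ∀ m, Module.finrank k (LinearMap.range (f ^ m)) ≤
      Module.finrank k (LinearMap.range (f ^ (m + 1))) +
        ((Finset.range (n - i)).filter (fun j => m < l j)).card := by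
    intro m
    have hle : LinearMap.range (X ^ (m + 1)) ≤ LinearMap.range (X ^ m) := by
      rw [pow_succ]
      exact LinearMap.range_comp_le_range _ _
    have h1 := finrank_map_add_le U.mkQ hle
    rw [← hrange, ← hrange, hX, hX, sum_tsub_eq_add_card _ l m] at h1
    have h2 := (finrank_range_pow_le f m).trans (Nat.add_le_add_left hker _)
    have h3 := le_card_filter hanti (n := n) (m := m) (c := n - i)
      (a := Module.finrank k (LinearMap.range (f ^ m)) -
        Module.finrank k (LinearMap.range (f ^ (m + 1)))) (by omega) (by omega)
    omega
  have htel : ∀ M, Module.finrank k (LinearMap.range (f ^ 0)) ≤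
      Module.finrank k (LinearMap.range (f ^ M)) +
        ∑ m ∈ Finset.range M, ((Finset.range (n - i)).filter (fun j => m < l j)).card := by
    intro M
    induction M with
    | zero => simp
    | succ M ih =>
      rw [Finset.sum_range_succ]
      have := hstep M
      omega
  obtain ⟨M, hM⟩ := hnil
  have hN := htel M
  rw [hrange M, hM, LinearMap.range_zero, Submodule.map_bot, finrank_bot, pow_zero,
    Module.End.one_eq_id, LinearMap.range_id, finrank_top] at hN
  have hle := sum_card_filter_le l (n - i) M
  have hsplit := Finset.sum_range_add_sum_Ico l (Nat.sub_le n i)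
  omega
end

section
/- Let k be a field, let X be a nilpotent n×n matrix over k of Jordan type λ, and let 1 ≤ i ≤ n−1. Then the stable rank of the leading principal submatrix X_{≤i,≤i} is at most d_{λ,i}, i.e. rank((X_{≤i,≤i})^i) ≤ d_{λ,i}. -/
/-- `d_{λ,i} = i - ∑_{j = n - i + 1}^{n} λ_j` (with `0`-indexed parts `λ_j = l (j-1)`). -/
def dPart (n : ℕ) (l : ℕ → ℕ) (i : ℕ) : ℕ :=
  i - ∑ j ∈ Finset.Ico (n - i) n, l j

/-- An `n × n` matrix `X` has Jordan type `λ` iff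
`rank (X ^ m) = ∑_j max (λ_j - m) 0` for all `m ≥ 0`. -/
def HasJordanType {k : Type*} [Field k] {n : ℕ} (X : Matrix (Fin n) (Fin n) k)
    (l : ℕ → ℕ) : Prop :=
  ∀ m : ℕ, (X ^ m).rank = ∑ j ∈ Finset.range n, (l j - m)

open Module

section

variable {k V U : Type*} [Field k] [AddCommGroup V] [Module k V] [FiniteDimensional k V]
  [AddCommGroup U] [Module k U]

/-- Modulo an `f`-stable subspace containing `ker π`, the inclusion `ι` intertwines the compression
`π ∘ f ∘ ι` with `f`; if `f ^ m = 0`, the image of the `m`-th power of the compression therefore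
lies in the image of that subspace under `π`. -/
lemma finrank_range_pow_add_le_of_invariant (f : V →ₗ[k] V) (π : V →ₗ[k] U) (ι : U →ₗ[k] V)
    (hπι : ∀ u, π (ι u) = u) (m : ℕ) (hm : f ^ m = 0) (N : Submodule k V)
    (hC : LinearMap.ker π ≤ N) (hN : ∀ x ∈ N, f x ∈ N) :
    finrank k (LinearMap.range ((π ∘ₗ f ∘ₗ ι) ^ m)) + finrank k (LinearMap.ker π)
      ≤ finrank k N := by
  have key : ∀ (s : ℕ) (u : U), ι (((π ∘ₗ f ∘ₗ ι) ^ s) u) - (f ^ s) (ι u) ∈ N := by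
    intro s u
    induction s with
    | zero => simp
    | succ s ih =>
      rw [pow_succ', pow_succ', Module.End.mul_apply, Module.End.mul_apply]
      set v := ((π ∘ₗ f ∘ₗ ι) ^ s) u
      have h1 : ι ((π ∘ₗ f ∘ₗ ι) v) - f (ι v) ∈ N := by
        apply hC
        simp [hπι]
      have h2 := N.add_mem h1 (hN _ ih)
      simpa using h2
  have hle : LinearMap.range ((π ∘ₗ f ∘ₗ ι) ^ m) ≤ LinearMap.range (π.domRestrict N) := by
    rintro _ ⟨u, rfl⟩
    have := key m u
    rw [hm] at this
    exact ⟨⟨_, by simpa using this⟩, by simp [hπι]⟩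
  have hker : finrank k (LinearMap.ker (π.domRestrict N)) = finrank k (LinearMap.ker π) := by
    rw [LinearMap.ker_domRestrict]
    exact (Submodule.submoduleOfEquivOfLe hC).finrank_eq
  rw [← (π.domRestrict N).finrank_range_add_finrank_ker, hker]
  exact Nat.add_le_add_right (Submodule.finrank_mono hle) _

lemma finrank_range_pow_add_le (f : V →ₗ[k] V) (π : V →ₗ[k] U) (ι : U →ₗ[k] V)
    (hπι : ∀ u, π (ι u) = u) (m : ℕ) (hm : f ^ m = 0) (q : ℕ) :
    finrank k (LinearMap.range ((π ∘ₗ f ∘ₗ ι) ^ m)) + finrank k (LinearMap.ker π)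
      ≤ q * finrank k (LinearMap.ker π) + finrank k (LinearMap.range (f ^ q)) := by
  set C := LinearMap.ker π
  set D : Submodule k V := (Finset.range q).sup fun s => C.map (f ^ s)
  have hDle : finrank k D ≤ q * finrank k C := by
    have : ∀ t : ℕ, finrank k ((Finset.range t).sup fun s => C.map (f ^ s) : Submodule k V)
        ≤ t * finrank k C := by
      intro t
      induction t with
      | zero => rw [Finset.range_zero, Finset.sup_empty, finrank_bot]; exact Nat.zero_le _
      | succ t ih =>
        rw [Finset.range_add_one, Finset.sup_insert, add_mul, one_mul, add_comm]
        exact (Submodule.finrank_add_le_finrank_add_finrank _ _).trans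
          (Nat.add_le_add (Submodule.finrank_map_le _ _) ih)
    exact this q
  have hpow : ∀ s, C.map (f ^ s) ≤ D ⊔ LinearMap.range (f ^ q) := by
    intro s
    rcases lt_or_ge s q with h | h
    · exact le_sup_of_le_left
        (Finset.le_sup (f := fun s => C.map (f ^ s)) (Finset.mem_range.2 h))
    · refine le_sup_of_le_right ?_
      rintro _ ⟨x, -, rfl⟩
      refine ⟨(f ^ (s - q)) x, ?_⟩
      rw [← Module.End.mul_apply, ← pow_add, Nat.add_sub_cancel' h]
  refine (finrank_range_pow_add_le_of_invariant f π ι hπι m hm (D ⊔ LinearMap.range (f ^ q))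
    ?_ ?_).trans ((Submodule.finrank_add_le_finrank_add_finrank _ _).trans
      (Nat.add_le_add_right hDle _))
  · simpa [Module.End.one_eq_id] using hpow 0
  · suffices h : D ⊔ LinearMap.range (f ^ q) ≤ (D ⊔ LinearMap.range (f ^ q)).comap f from
      fun x hx => h hx
    refine sup_le (Finset.sup_le fun s _ => ?_) ?_
    · rintro _ ⟨x, hx, rfl⟩
      refine hpow (s + 1) ⟨x, hx, ?_⟩
      rw [pow_succ', Module.End.mul_apply]
    · rintro _ ⟨x, rfl⟩
      refine Submodule.mem_sup_right ⟨f x, ?_⟩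
      rw [← Module.End.mul_apply, ← Module.End.mul_apply, ← pow_succ, ← pow_succ']

/-- The rank of the powers of an endomorphism is constant from the dimension on. -/
lemma finrank_range_pow_eq_of_le [FiniteDimensional k U] (g : U →ₗ[k] U) {m : ℕ} (hm : finrank k U ≤ m) :
    finrank k (LinearMap.range (g ^ m)) = finrank k (LinearMap.range (g ^ finrank k U)) := by
  have h1 := (g ^ m).finrank_range_add_finrank_ker
  have h2 := (g ^ finrank k U).finrank_range_add_finrank_ker
  have h3 := Module.End.ker_pow_eq_ker_pow_finrank_of_le (f := g) hm
  rw [h3] at h1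
  omega

end

/-- If `X` is a nilpotent `n × n` matrix of Jordan type `λ` and `1 ≤ i ≤ n - 1`, then the
stable rank of the leading principal `i × i` submatrix `X_{≤i,≤i}` is at most `d_{λ,i}`. -/
theorem stable_rank_le_dPart {k : Type*} [Field k] (n : ℕ) (l : ℕ → ℕ)
    (hl : IsPartition n l) (X : Matrix (Fin n) (Fin n) k) (hnil : IsNilpotent X)
    (hX : HasJordanType X l) (i : ℕ) (hi1 : 1 ≤ i) (hin : i < n) :
    ((X.submatrix (Fin.castLE hin.le) (Fin.castLE hin.le)) ^ i).rank ≤ dPart n l i := by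
  obtain ⟨hanti, -, hsum⟩ := hl
  obtain ⟨m₀, hm₀⟩ := hnil
  set e : Fin i → Fin n := Fin.castLE hin.le
  have he : Function.Injective e := Fin.castLE_injective hin.le
  have hrank : ∀ {a : ℕ} (Y : Matrix (Fin a) (Fin a) k) (s : ℕ),
      (Y ^ s).rank = finrank k (LinearMap.range (Matrix.toLin' Y ^ s)) := by
    intro a Y s
    rw [← Matrix.toLin'_pow]
    rfl
  set π := Matrix.toLin' ((1 : Matrix (Fin n) (Fin n) k).submatrix e id)
  set ι := Matrix.toLin' ((1 : Matrix (Fin n) (Fin n) k).submatrix id e)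
  have hA : Matrix.toLin' (X.submatrix e e) = π ∘ₗ Matrix.toLin' X ∘ₗ ι := by
    rw [← Matrix.toLin'_mul, ← Matrix.toLin'_mul]
    congr 1
    ext a b
    simp [Matrix.mul_apply, Matrix.one_apply]
  have hπι : ∀ u, π (ι u) = u := by
    intro u
    rw [← LinearMap.comp_apply, ← Matrix.toLin'_mul]
    have : (1 : Matrix (Fin n) (Fin n) k).submatrix e id *
        (1 : Matrix (Fin n) (Fin n) k).submatrix id e = 1 := by
      ext a b
      simp [Matrix.mul_apply, Matrix.one_apply, he.eq_iff]
    rw [this, Matrix.toLin'_one, LinearMap.id_apply]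
  have hker : finrank k (LinearMap.ker π) = n - i := by
    have h := π.finrank_range_add_finrank_ker
    rw [LinearMap.range_eq_top.2 fun u => ⟨ι u, hπι u⟩, finrank_top] at h
    simp only [finrank_fin_fun] at h
    omega
  have hm : Matrix.toLin' X ^ (i + m₀) = 0 := by
    rw [← Matrix.toLin'_pow, pow_add, hm₀, mul_zero, map_zero]
  have hstab := finrank_range_pow_eq_of_le (Matrix.toLin' (X.submatrix e e)) (m := i + m₀)
    (by simp)
  rw [finrank_fin_fun] at hstab
  set q := l (n - i - 1)
  have hmain := finrank_range_pow_add_le (Matrix.toLin' X) π ι hπι _ hm q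
  rw [← hA, hstab, ← hrank, ← hrank, hX, hker] at hmain
  have hsplit := Finset.sum_range_add_sum_Ico l (Nat.sub_le n i)
  have hsplit' := Finset.sum_range_add_sum_Ico (fun j => l j - q) (Nat.sub_le n i)
  -- the parts after the `(n - i)`-th are at most `q`, the earlier ones at least `q`
  have htail : ∑ j ∈ Finset.Ico (n - i) n, (l j - q) = 0 :=
    Finset.sum_eq_zero fun j hj =>
      Nat.sub_eq_zero_of_le (hanti (by have := (Finset.mem_Ico.1 hj).1; omega))
  have hhead : (n - i) * q + ∑ j ∈ Finset.range (n - i), (l j - q)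
      = ∑ j ∈ Finset.range (n - i), l j := by
    have : (n - i) * q = ∑ j ∈ Finset.range (n - i), q := by simp
    rw [this, ← Finset.sum_add_distrib]
    refine Finset.sum_congr rfl fun j hj => Nat.add_sub_cancel' (hanti ?_)
    have := Finset.mem_range.1 hj
    omega
  rw [mul_comm] at hhead
  unfold dPart
  omega
end

section
/- Let k be a field, let X be a nilpotent n×n matrix over k, let 1 ≤ i ≤ n, and let U be an X-invariant linear subspace of k^n contained in the coordinate subspace spanned by the first i standard basis vectors, with dim U = u. Then rank((X_{≤i,≤i})^i) ≤ i − u. -/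
/-!
Write `Y = X_{≤i,≤i}` and let `r : k^n → k^i` be truncation to the first `i` coordinates. For
vectors `v` supported on those coordinates, `r (X v) = Y (r v)`. Hence on the `X`-invariant
subspace `U`, where `r` is injective, `Y ^ N (r v) = r (X ^ N v) = 0` once `X ^ N = 0`. So `r(U)`
is a `u`-dimensional subspace of `ker (Y ^ N)`. The kernels of the powers of `Y` stabilise at
exponent `i = dim k^i`, so `r(U) ⊆ ker (Y ^ i)`, and rank-nullity gives the bound.
-/

/-- Truncating to the first `i` coordinates intertwines `X` with its leading `i × i` block on
vectors supported on those coordinates. -/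
lemma submatrix_mulVec_comp_castLE {k : Type*} [Field k] {n i : ℕ}
    (X : Matrix (Fin n) (Fin n) k) (hin : i ≤ n) (v : Fin n → k)
    (hv : ∀ j : Fin n, i ≤ (j : ℕ) → v j = 0) :
    (X.submatrix (Fin.castLE hin) (Fin.castLE hin)).mulVec (v ∘ Fin.castLE hin) =
      X.mulVec v ∘ Fin.castLE hin := by
  ext a
  simp only [Matrix.mulVec, dotProduct, Function.comp, Matrix.submatrix_apply]
  refine Fintype.sum_of_injective (Fin.castLE hin) (Fin.castLE_injective hin) _ _ ?_ fun _ => rfl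
  intro j hj
  have hij : i ≤ (j : ℕ) := by
    by_contra h
    exact hj ⟨⟨j, by omega⟩, rfl⟩
  rw [hv j hij, mul_zero]

/-- If `X` is a nilpotent `n × n` matrix, `1 ≤ i ≤ n`, and `U` is an `X`-invariant subspace of
`k^n` of dimension `u` contained in the coordinate subspace spanned by the first `i` standard
basis vectors, then `rank ((X_{≤i,≤i}) ^ i) ≤ i - u`. -/
theorem stable_rank_le_of_invariant_subspace {k : Type*} [Field k] (n : ℕ)
    (X : Matrix (Fin n) (Fin n) k) (hnil : IsNilpotent X)
    (i : ℕ) (hi1 : 1 ≤ i) (hin : i ≤ n)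
    (U : Submodule k (Fin n → k))
    (hUinv : ∀ v ∈ U, X.mulVec v ∈ U)
    (hUcoord : ∀ v ∈ U, ∀ j : Fin n, i ≤ (j : ℕ) → v j = 0)
    (u : ℕ) (hu : Module.finrank k U = u) :
    ((X.submatrix (Fin.castLE hin) (Fin.castLE hin)) ^ i).rank ≤ i - u := by
  obtain ⟨N, hN⟩ := hnil
  set Y := X.submatrix (Fin.castLE hin) (Fin.castLE hin) with hY
  let r : (Fin n → k) →ₗ[k] (Fin i → k) := LinearMap.funLeft k k (Fin.castLE hin)
  have hpow : ∀ m : ℕ, ∀ v ∈ U, (Y ^ m).mulVec (r v) = r ((X ^ m).mulVec v) := by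
    intro m
    induction m with
    | zero => intro v _; simp
    | succ m ih =>
      intro v hv
      have h1 : Y.mulVec (r v) = r (X.mulVec v) :=
        submatrix_mulVec_comp_castLE X hin v (hUcoord v hv)
      rw [pow_succ, pow_succ, ← Matrix.mulVec_mulVec, ← Matrix.mulVec_mulVec, h1,
        ih _ (hUinv v hv)]
  have hinj : Function.Injective (r.domRestrict U) := by
    rw [← LinearMap.ker_eq_bot, LinearMap.ker_eq_bot']
    rintro ⟨v, hv⟩ h
    ext j
    rcases lt_or_ge (j : ℕ) i with hj | hj
    · exact congrFun h ⟨j, hj⟩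
    · exact hUcoord v hv j hj
  have hle : LinearMap.range (r.domRestrict U) ≤ LinearMap.ker (Y ^ i).mulVecLin := by
    rintro _ ⟨⟨v, hv⟩, rfl⟩
    have hker : r v ∈ LinearMap.ker (Matrix.toLin' Y ^ N) := by
      rw [LinearMap.mem_ker, ← Matrix.toLin'_pow, Matrix.toLin'_apply, hpow N v hv, hN]
      simp
    have h := Module.End.ker_pow_le_ker_pow_finrank (Matrix.toLin' Y) N hker
    rwa [Module.finrank_fin_fun, ← Matrix.toLin'_pow] at h
  have h1 := Submodule.finrank_mono hle
  rw [LinearMap.finrank_range_of_inj hinj, hu] at h1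
  have h2 := LinearMap.finrank_range_add_finrank_ker (Y ^ i).mulVecLin
  rw [Module.finrank_fin_fun] at h2
  unfold Matrix.rank
  omega
end

section
/- Let k be a field, let i ≥ 2, and let h ∈ {1,…,i−1}. Then there exists a regular nilpotent i×i matrix X over k (i.e. X nilpotent with X^{i−1} ≠ 0) such that the leading principal submatrix X_{≤h,≤h} is invertible. -/
/-!
Let `N` be the shift `e_b ↦ e_{b+1}` (with `e_{i-1} ↦ 0`), which is regular nilpotent. In the basis
obtained from the standard one by replacing `e_h` with `e_h - e_0`, its matrix is `X = P N P⁻¹`,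
where `P = 1 + E_{0,h}` is a transvection. The leading `h × h` corner of `X` describes the map that
`N` induces on `span(e_0, …, e_{h-1}) ≅ V / span(e_h - e_0, e_{h+1}, …, e_{i-1})`. In this quotient
`e_h = e_0`, so that map is the cyclic permutation of `e_0, …, e_{h-1}`, which is invertible.
-/

/-- The lower shift matrix, sending the basis vector `e_b` to `e_{b+1}` and the last one to `0`. -/
def lowerShift (k : Type*) [Field k] (i : ℕ) : Matrix (Fin i) (Fin i) k :=
  Matrix.of fun a b => if a.val = b.val + 1 then 1 else 0

lemma lowerShift_apply (k : Type*) [Field k] (i : ℕ) (a b : Fin i) :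
    lowerShift k i a b = if a.val = b.val + 1 then 1 else 0 := rfl

lemma lowerShift_pow_apply (k : Type*) [Field k] (i n : ℕ) (a b : Fin i) :
    (lowerShift k i ^ n) a b = if a.val = b.val + n then 1 else 0 := by
  induction n generalizing b with
  | zero => simp [Matrix.one_apply, Fin.ext_iff]
  | succ n ih =>
    rw [pow_succ, Matrix.mul_apply]
    simp only [ih, lowerShift_apply]
    by_cases hb : b.val + 1 < i
    · rw [Finset.sum_eq_single (⟨b.val + 1, hb⟩ : Fin i)]
      · simp [add_assoc, add_comm 1 n]
      · intro c _ hc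
        have : c.val ≠ b.val + 1 := fun e => hc (Fin.ext e)
        simp [this]
      · simp
    · rw [if_neg (by omega)]
      refine Finset.sum_eq_zero fun c _ => ?_
      rw [if_neg (show ¬ c.val = b.val + 1 by omega), mul_zero]

lemma lowerShift_pow_self (k : Type*) [Field k] (i : ℕ) : lowerShift k i ^ i = 0 := by
  ext a b
  rw [lowerShift_pow_apply, if_neg (by omega), Matrix.zero_apply]

lemma lowerShift_pow_pred_ne_zero (k : Type*) [Field k] (i : ℕ) (hi : 0 < i) :
    lowerShift k i ^ (i - 1) ≠ 0 := by
  intro e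
  have := congrFun (congrFun e ⟨i - 1, by omega⟩) ⟨0, hi⟩
  simp [lowerShift_pow_apply] at this

/-- For any field `k`, any `i ≥ 2` and any `h ∈ {1, …, i-1}`, there exists a regular nilpotent
`i × i` matrix `X` over `k` (i.e. `X` nilpotent with `X ^ (i-1) ≠ 0`) such that the leading
principal `h × h` submatrix `X_{≤h,≤h}` is invertible. -/
theorem exists_regular_nilpotent_with_invertible_corner {k : Type*} [Field k]
    (i : ℕ) (hi : 2 ≤ i) (h : ℕ) (hh1 : 1 ≤ h) (hh2 : h < i) :
    ∃ X : Matrix (Fin i) (Fin i) k, IsNilpotent X ∧ X ^ (i - 1) ≠ 0 ∧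
      IsUnit (X.submatrix (Fin.castLE hh2.le) (Fin.castLE hh2.le)) := by
  obtain ⟨m, rfl⟩ : ∃ m, h = m + 1 := ⟨h - 1, by omega⟩
  set z : Fin i := ⟨0, by omega⟩ with hz
  set t : Fin i := ⟨m + 1, hh2⟩ with ht
  have hzt : z ≠ t := by simp [hz, ht]
  let P : (Matrix (Fin i) (Fin i) k)ˣ :=
    ⟨Matrix.transvection z t 1, Matrix.transvection z t (-1),
      by rw [Matrix.transvection_mul_transvection_same z t hzt]; simp,
      by rw [Matrix.transvection_mul_transvection_same z t hzt]; simp⟩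
  refine ⟨P.val * lowerShift k i * P⁻¹.val, ⟨i, ?_⟩, ?_, ?_⟩
  · rw [Units.conj_pow, lowerShift_pow_self]; simp
  · rw [Units.conj_pow]
    rw [Ne, Units.mul_left_eq_zero, Units.mul_right_eq_zero]
    exact lowerShift_pow_pred_ne_zero k i (by omega)
  · have key : (P.val * lowerShift k i * P⁻¹.val).submatrix
        (Fin.castLE hh2.le) (Fin.castLE hh2.le) =
        ((finRotate (m + 1)).permMatrix k).transpose := by
      ext a b
      -- `P⁻¹` only alters column `t`, which lies outside the corner.
      have hb : Fin.castLE hh2.le b ≠ t := by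
        have := b.2
        simp only [ht, ne_eq, Fin.ext_iff, Fin.val_castLE]; omega
      rw [Matrix.submatrix_apply]
      change (Matrix.transvection z t 1 * lowerShift k i * Matrix.transvection z t (-1) :
        Matrix (Fin i) (Fin i) k) _ _ = _
      rw [Matrix.mul_transvection_apply_of_ne _ _ _ _ hb, Matrix.transpose_apply,
        Equiv.Perm.permMatrix, PEquiv.toMatrix_apply]
      have hrot : (finRotate (m + 1) b).val = if b.val = m then 0 else b.val + 1 := by
        rw [coe_finRotate]; simp [Fin.ext_iff]
      have ha2 := a.2
      have hb2 := b.2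
      simp only [Equiv.toPEquiv_apply, Option.mem_some_iff, Fin.ext_iff, hrot]
      by_cases ha : a.val = 0
      · have e : Fin.castLE hh2.le a = z := Fin.ext ha
        rw [e, Matrix.transvection_mul_apply_same]
        simp only [lowerShift_apply, hz, ht, Fin.val_castLE, ha]
        by_cases hbm : b.val = m
        · simp [hbm]
        · simp [hbm, Ne.symm hbm]
      · have e : Fin.castLE hh2.le a ≠ z := fun e => ha (congrArg Fin.val e)
        rw [Matrix.transvection_mul_apply_of_ne _ _ _ _ e]
        simp only [lowerShift_apply, Fin.val_castLE]
        refine if_congr ?_ rfl rfl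
        split_ifs <;> omega
    rw [key, Matrix.isUnit_iff_isUnit_det, Matrix.det_transpose, Matrix.det_permutation]
    exact (Units.isUnit _).map (Int.castRingHom k)
end

section
/- Let k be a field and let i ≥ 2. Then there exists a regular nilpotent i×i matrix X over k (i.e. X nilpotent with X^{i−1} ≠ 0) such that the leading principal submatrix X_{≤h,≤h} is invertible for every h ∈ {1,…,i−1}. -/
/-!
The polynomials `p_j = 1 + x + ⋯ + x ^ j`, `0 ≤ j < i`, form a basis of `k[x] / (x ^ i)`.
Multiplication by `x` is a regular nilpotent operator there, and it satisfies
`x p_j = p_{j+1} - p_0` for `j + 1 < i` and `x p_{i-1} = p_{i-1} - p_0`.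
The matrix `X` (`cornerMatrix`) recording these relations is therefore similar to a nilpotent Jordan
block; the similarity is `X * G = G * N` (`cornerMatrix_mul_basisMatrix`), where row `j` of `G`
holds the coefficients of `p_j` and `N` is the matrix of multiplication by `x` on monomials.

For `h < i` the leading `h × h` corner of `X` is the companion-type matrix with ones on the
superdiagonal and `-1` in the first column (its characteristic polynomial is `p_h`, and
`p_h(0) = 1`). A vector `v` in its kernel satisfies `v_{a+1} = v_0` for `a + 1 < h`, while the last
row gives `v_0 = 0`; so `v = 0` and the corner is invertible.
-/

namespace RegularNilpotentCorners

/-- The nilpotent Jordan block with ones on the superdiagonal. -/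
def jordanBlock (k : Type*) [Field k] (n : ℕ) : Matrix (Fin (n + 1)) (Fin (n + 1)) k :=
  Matrix.of fun a b => if b.val = a.val + 1 then 1 else 0

/-- The matrix whose row `j` lists the coefficients of `1 + x + ⋯ + x ^ j`. -/
def basisMatrix (k : Type*) [Field k] (n : ℕ) : Matrix (Fin (n + 1)) (Fin (n + 1)) k :=
  Matrix.of fun a b => if b ≤ a then 1 else 0

/-- The successor on `Fin (n + 1)`, saturating at the last element. -/
def satSucc {n : ℕ} (a : Fin (n + 1)) : Fin (n + 1) := ⟨min (a.val + 1) n, by omega⟩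

/-- The matrix of multiplication by `x` on `k[x] / (x ^ (n + 1))` in the basis
`1 + x + ⋯ + x ^ j`, with row `a` holding the coordinates of the image of basis vector `a`. -/
def cornerMatrix (k : Type*) [Field k] (n : ℕ) : Matrix (Fin (n + 1)) (Fin (n + 1)) k :=
  Matrix.of fun a c => (if c = satSucc a then 1 else 0) - (if c = 0 then 1 else 0)

variable {k : Type*} [Field k] {n : ℕ}

theorem jordanBlock_pow_apply (m : ℕ) (a b : Fin (n + 1)) :
    (jordanBlock k n ^ m) a b = if b.val = a.val + m then 1 else 0 := by
  induction m generalizing b with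
  | zero => simp [Matrix.one_apply, Fin.ext_iff, eq_comm]
  | succ m ih =>
    rw [pow_succ, Matrix.mul_apply]
    simp only [ih]
    simp only [jordanBlock, Matrix.of_apply]
    by_cases hm : a.val + m < n + 1
    · rw [Finset.sum_eq_single (⟨a.val + m, hm⟩ : Fin (n + 1))]
      · simp [add_assoc]
      · intro c _ hc
        rw [if_neg (fun h => hc (Fin.ext h)), zero_mul]
      · simp
    · rw [if_neg (by omega)]
      refine Finset.sum_eq_zero fun c _ => ?_
      rw [if_neg (by omega), zero_mul]

theorem isUnit_basisMatrix : IsUnit (basisMatrix k n) := by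
  rw [Matrix.isUnit_iff_isUnit_det, Matrix.det_of_isLowerTriangular]
  · simp [basisMatrix]
  · intro a b hab
    have hab' : a < b := hab
    simp [basisMatrix, hab']

/-- Both sides have entry `1` at `(a, b)` exactly when `1 ≤ b ≤ a + 1`, and `0` otherwise. -/
theorem cornerMatrix_mul_basisMatrix :
    cornerMatrix k n * basisMatrix k n = basisMatrix k n * jordanBlock k n := by
  ext a b
  have hr : (basisMatrix k n * jordanBlock k n) a b =
      if 1 ≤ b.val ∧ b.val ≤ a.val + 1 then 1 else 0 := by
    rw [Matrix.mul_apply]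
    simp only [basisMatrix, jordanBlock, Matrix.of_apply]
    by_cases hb : 1 ≤ b.val
    · rw [Finset.sum_eq_single (⟨b.val - 1, by omega⟩ : Fin (n + 1))]
      · simp only [Fin.le_def]
        rw [if_pos (show b.val = b.val - 1 + 1 by omega), mul_one]
        exact if_congr (by omega) rfl rfl
      · intro c _ hc
        rw [if_neg (c := b.val = _) (fun h => hc (Fin.ext (by simp; omega))), mul_zero]
      · simp
    · rw [if_neg (by omega)]
      refine Finset.sum_eq_zero fun c _ => ?_
      rw [if_neg (c := b.val = _) (by omega), mul_zero]
  have hl : (cornerMatrix k n * basisMatrix k n) a b =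
      (if b ≤ satSucc a then 1 else 0) - (if b ≤ 0 then 1 else 0) := by
    rw [Matrix.mul_apply]
    simp only [cornerMatrix, basisMatrix, Matrix.of_apply, sub_mul, Finset.sum_sub_distrib,
      ite_mul, one_mul, zero_mul, Finset.sum_ite_eq', Finset.mem_univ, if_true]
  rw [hr, hl]
  have h1 : b ≤ satSucc a ↔ b.val ≤ a.val + 1 := by
    simp only [Fin.le_def, satSucc]; omega
  have h2 : b ≤ 0 ↔ b.val = 0 := by
    simp
  simp only [h1, h2]
  by_cases hb : b.val = 0
  · simp [hb]
  · simp [hb, Nat.one_le_iff_ne_zero]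

theorem cornerMatrix_pow_mul_basisMatrix (m : ℕ) :
    cornerMatrix k n ^ m * basisMatrix k n = basisMatrix k n * jordanBlock k n ^ m :=
  ((show SemiconjBy (basisMatrix k n) (jordanBlock k n) (cornerMatrix k n) from
    cornerMatrix_mul_basisMatrix.symm).pow_right m).symm

theorem cornerMatrix_pow_eq_zero_iff (m : ℕ) :
    cornerMatrix k n ^ m = 0 ↔ jordanBlock k n ^ m = 0 := by
  rw [← isUnit_basisMatrix.mul_left_eq_zero, cornerMatrix_pow_mul_basisMatrix,
    isUnit_basisMatrix.mul_right_eq_zero]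

theorem isUnit_corner (m : ℕ) (hm : m + 1 < n + 1) :
    IsUnit ((cornerMatrix k n).submatrix (Fin.castLE hm.le) (Fin.castLE hm.le)) := by
  rw [← Matrix.mulVec_injective_iff_isUnit]
  refine (injective_iff_map_eq_zero
    (Matrix.mulVecLin ((cornerMatrix k n).submatrix (Fin.castLE hm.le) (Fin.castLE hm.le)))).2 ?_
  intro v hv
  have hrow (a : Fin (m + 1)) :
      (∑ c : Fin (m + 1), if c.val = a.val + 1 then v c else 0) - v 0 = 0 := by
    have h := congrFun hv a
    -- Since `a ≤ m < n`, the successor of `a` does not saturate.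
    have hs (c : Fin (m + 1)) :
        Fin.castLE hm.le c = satSucc (Fin.castLE hm.le a) ↔ c.val = a.val + 1 := by
      simp only [Fin.ext_iff, satSucc, Fin.val_castLE]; omega
    have hz (c : Fin (m + 1)) : Fin.castLE hm.le c = 0 ↔ c = 0 := by
      simp only [Fin.ext_iff, Fin.val_castLE, Fin.val_zero]
    simpa only [Matrix.mulVecLin_apply, Matrix.mulVec, dotProduct, Matrix.submatrix_apply,
      cornerMatrix, Matrix.of_apply, hs, hz, sub_mul, Finset.sum_sub_distrib, ite_mul, one_mul,
      zero_mul, Finset.sum_ite_eq', Finset.mem_univ, if_true, Pi.zero_apply] using h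
  have h0 : v 0 = 0 := by
    have h := hrow (Fin.last m)
    rw [Finset.sum_eq_zero] at h
    · simpa using h
    · intro c _
      rw [if_neg]
      simp only [Fin.val_last]
      omega
  ext c
  by_cases hc : c.val = 0
  · rw [show c = 0 from Fin.ext hc, h0]; rfl
  · have h := hrow ⟨c.val - 1, by omega⟩
    rw [Finset.sum_eq_single c, if_pos (by simp only; omega), h0, sub_zero] at h
    · exact h
    · intro d _ hd
      rw [if_neg]
      intro h
      exact hd (Fin.ext (by simp only at h; omega))
    · simp

end RegularNilpotentCorners

open RegularNilpotentCorners in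
/-- For any field `k` and any `i ≥ 2`, there exists a regular nilpotent `i × i` matrix `X`
over `k` (i.e. `X` nilpotent with `X ^ (i-1) ≠ 0`) such that the leading principal `h × h`
submatrix `X_{≤h,≤h}` is invertible for every `h ∈ {1, …, i-1}`. -/
theorem exists_regular_nilpotent_with_all_invertible_corners {k : Type*} [Field k]
    (i : ℕ) (hi : 2 ≤ i) :
    ∃ X : Matrix (Fin i) (Fin i) k, IsNilpotent X ∧ X ^ (i - 1) ≠ 0 ∧
      ∀ (h : ℕ), 1 ≤ h → ∀ (hh2 : h < i),
        IsUnit (X.submatrix (Fin.castLE hh2.le) (Fin.castLE hh2.le)) := by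
  obtain ⟨n, rfl⟩ : ∃ n, i = n + 1 := ⟨i - 1, by omega⟩
  refine ⟨cornerMatrix k n, ⟨n + 1, ?_⟩, ?_, ?_⟩
  · rw [cornerMatrix_pow_eq_zero_iff]
    ext a b
    rw [jordanBlock_pow_apply, if_neg (by omega)]
    rfl
  · rw [Ne, cornerMatrix_pow_eq_zero_iff]
    intro h
    -- The top right entry of the `n`-th power of the Jordan block is `1`.
    have h' := congrFun (congrFun h 0) (Fin.last n)
    rw [jordanBlock_pow_apply] at h'
    simp at h'
  · intro h h1 hh
    obtain ⟨m, rfl⟩ : ∃ m, h = m + 1 := ⟨h - 1, by omega⟩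
    exact isUnit_corner m hh
end

section
/- Let k be a field, let λ be a partition of n, and let 1 ≤ i ≤ n−1. Then there exists a nilpotent n×n matrix X over k of Jordan type λ such that the stable rank of X_{≤i,≤i} equals d_{λ,i}, i.e. rank((X_{≤i,≤i})^i) = d_{λ,i}. -/
/-! ### Choice of the block sizes -/

theorem exists_le_sum_eq (g : ℕ → ℕ) (r d : ℕ) (h : d ≤ ∑ j ∈ Finset.range r, g j) :
    ∃ a : ℕ → ℕ, (∀ j, a j ≤ g j) ∧ ∑ j ∈ Finset.range r, a j = d := by
  induction r generalizing d with
  | zero => exact ⟨fun _ => 0, by simp, by simp at h; simp [h]⟩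
  | succ r ih =>
    rw [Finset.sum_range_succ] at h
    obtain ⟨a, ha, hs⟩ := ih (d - g r) (by omega)
    refine ⟨fun j => if j = r then min d (g r) else a j, fun j => ?_, ?_⟩
    · dsimp only
      split_ifs with hj
      · subst hj; exact min_le_right _ _
      · exact ha j
    · rw [Finset.sum_range_succ, Finset.sum_congr rfl (g := a), hs]
      · simp only [if_true]; omega
      · intro j hj
        rw [if_neg (Finset.mem_range.mp hj).ne]

theorem exists_compression_sizes (n : ℕ) (l : ℕ → ℕ) (hl : IsPartition n l) (i : ℕ)
    (hi1 : 1 ≤ i) (hin : i < n) :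
    ∃ a : ℕ → ℕ, (∀ j, a j ≤ l j) ∧ (∀ j, j < n - i → 0 < a j → a j < l j) ∧
      (∀ j, n - i ≤ j → a j = l j) ∧ ∑ j ∈ Finset.range (n - i), a j = dPart n l i ∧
      ∑ j ∈ Finset.range n, a j = i := by
  obtain ⟨hanti, -, hsum⟩ := hl
  have hsplit := Finset.sum_range_add_sum_Ico l (Nat.sub_le n i)
  rw [hsum] at hsplit
  have htail : ∑ j ∈ Finset.Ico (n - i) n, l j ≤ i := by
    rcases Nat.eq_zero_or_pos (l (n - i)) with h0 | h0
    · rw [Finset.sum_eq_zero]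
      · omega
      · intro j hj
        have := hanti (Finset.mem_Ico.mp hj).1
        omega
    · have : (Finset.range (n - i)).card • 1 ≤ ∑ j ∈ Finset.range (n - i), l j :=
        Finset.card_nsmul_le_sum _ _ _ fun j hj =>
          h0.trans_le (hanti (Finset.mem_range.mp hj).le)
      simp at this
      omega
  have hle : dPart n l i ≤ ∑ j ∈ Finset.range (n - i), (l j - 1) := by
    have h1 : ∑ j ∈ Finset.range (n - i), l j ≤ ∑ j ∈ Finset.range (n - i), ((l j - 1) + 1) :=
      Finset.sum_le_sum fun j _ => by omega
    rw [Finset.sum_add_distrib] at h1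
    simp at h1
    unfold dPart
    omega
  obtain ⟨a, ha, hs⟩ := exists_le_sum_eq _ _ _ hle
  have hs' : ∑ j ∈ Finset.range (n - i), (if j < n - i then a j else l j) = dPart n l i := by
    rw [← hs]
    exact Finset.sum_congr rfl fun j hj => if_pos (Finset.mem_range.mp hj)
  refine ⟨fun j => if j < n - i then a j else l j, fun j => ?_, fun j hj h => ?_, fun j hj => ?_,
    hs', ?_⟩
  · have := ha j
    dsimp only
    split_ifs <;> omega
  · have := ha j
    simp only [if_pos hj] at h ⊢
    omega
  · exact if_neg (by omega)
  · rw [← Finset.sum_range_add_sum_Ico _ (Nat.sub_le n i), hs',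
      Finset.sum_congr rfl (g := l) fun j hj => if_neg (by have := Finset.mem_Ico.mp hj; omega)]
    change i - (∑ j ∈ Finset.Ico (n - i) n, l j) + ∑ j ∈ Finset.Ico (n - i) n, l j = i
    omega

/-! ### Linear algebra -/

/-- A map sending the basis vectors indexed by `D` injectively to basis vectors, and the other
basis vectors to `0`, has rank `#D`. -/
theorem finrank_range_of_partial_injection {k S : Type*} [Field k] [Fintype S]
    (f : (S →₀ k) →ₗ[k] (S →₀ k)) (D : Finset S) (φ : S → S) (hφ : Function.Injective φ)
    (h1 : ∀ s ∈ D, f (Finsupp.single s 1) = Finsupp.single (φ s) 1)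
    (h0 : ∀ s ∉ D, f (Finsupp.single s 1) = 0) :
    Module.finrank k (LinearMap.range f) = D.card := by
  have hli : LinearIndependent k (fun s : D => (Finsupp.single (φ s) 1 : S →₀ k)) :=
    (Finsupp.linearIndependent_single_one k S).comp (fun s : D => φ s)
      (hφ.comp Subtype.val_injective)
  have hrange : LinearMap.range f =
      Submodule.span k (Set.range fun s : D => (Finsupp.single (φ s) 1 : S →₀ k)) := by
    rw [LinearMap.range_eq_map, ← (Finsupp.basisSingleOne (R := k) (ι := S)).span_eq,
      Submodule.map_span]
    apply le_antisymm <;> rw [Submodule.span_le]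
    · rintro _ ⟨_, ⟨s, rfl⟩, rfl⟩
      rw [Finsupp.coe_basisSingleOne]
      by_cases hs : s ∈ D
      · rw [h1 s hs]
        exact Submodule.subset_span ⟨⟨s, hs⟩, rfl⟩
      · rw [h0 s hs]
        exact Submodule.zero_mem _
    · rintro _ ⟨s, rfl⟩
      refine Submodule.subset_span ⟨Finsupp.single s 1, ⟨s, by simp⟩, h1 s s.2⟩
  rw [hrange, finrank_span_eq_card hli, Fintype.card_coe]

/-- A retraction `B` of `A : W → V` identifies `W` with the first `i` coordinates of `V`, for a
suitable basis of `V`. -/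
theorem exists_basis_of_retraction {k V W : Type*} [Field k] [AddCommGroup V] [Module k V]
    [AddCommGroup W] [Module k W] [FiniteDimensional k V] {n i : ℕ} (hin : i ≤ n)
    (A : W →ₗ[k] V) (B : V →ₗ[k] W) (hBA : ∀ w, B (A w) = w)
    (hV : Module.finrank k V = n) (g : Module.Basis (Fin i) k W) :
    ∃ b : Module.Basis (Fin n) k V, (∀ p, b (Fin.castLE hin p) = A (g p)) ∧
      ∀ v p, b.repr v (Fin.castLE hin p) = g.repr (B v) p := by
  let R : V →ₗ[k] LinearMap.ker B :=
    (LinearMap.id - A ∘ₗ B).codRestrict (LinearMap.ker B) fun v => by simp [hBA]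
  let E : (W × LinearMap.ker B) ≃ₗ[k] V :=
    LinearEquiv.ofLinearMap (A.coprod (LinearMap.ker B).subtype) (B.prod R)
      (by ext v; simp [R])
      (by ext w <;> simp [R, hBA])
  have hW : Module.finrank k W = i := by simpa using Module.finrank_eq_card_basis g
  have : Module.Finite k W := Module.Finite.of_basis g
  have hK : Module.finrank k (LinearMap.ker B) = n - i := by
    have := E.finrank_eq
    rw [Module.finrank_prod] at this
    omega
  let c : Module.Basis (Fin (n - i)) k (LinearMap.ker B) := Module.finBasisOfFinrankEq k _ hK
  let ι : Fin i ⊕ Fin (n - i) ≃ Fin n := finSumFinEquiv.trans (finCongr (by omega))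
  have hι : ∀ p : Fin i, ι (Sum.inl p) = Fin.castLE hin p := fun p => by ext; simp [ι]
  refine ⟨((g.prod c).map E).reindex ι, fun p => ?_, fun v p => ?_⟩
  · rw [← hι]
    simp [E]
  · rw [← hι]
    simp [E]

theorem rank_toMatrix_pow {k V : Type*} [Field k] [AddCommGroup V] [Module k V] {n : ℕ}
    (b : Module.Basis (Fin n) k V) (f : V →ₗ[k] V) (m : ℕ) :
    (LinearMap.toMatrix b b f ^ m).rank = Module.finrank k (LinearMap.range (f ^ m)) := by
  rw [LinearMap.toMatrix_pow, Matrix.rank_eq_finrank_range_toLin _ b b, Matrix.toLin_toMatrix]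

/-! ### Block spaces and the shift -/

/-- Indices `(j, t)` with `j < n` and `t < a j`: a row of length `a j` for each `j`. -/
abbrev BlockIndex (n : ℕ) (a : ℕ → ℕ) : Type := Σ j : Fin n, Fin (a j)

/-- The basis vector at position `t` of row `j`, or `0` when `t` exceeds the row. -/
noncomputable def blockVec (k : Type*) [Field k] {n : ℕ} (a : ℕ → ℕ) (j : Fin n) (t : ℕ) :
    BlockIndex n a →₀ k :=
  if h : t < a j then Finsupp.single ⟨j, ⟨t, h⟩⟩ 1 else 0

section Block

variable {k : Type*} [Field k] {n : ℕ}

theorem blockVec_of_le {a : ℕ → ℕ} {j : Fin n} {t : ℕ} (h : a j ≤ t) :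
    blockVec k a j t = 0 := dif_neg (by omega)

theorem blockVec_fin {a : ℕ → ℕ} (s : BlockIndex n a) :
    blockVec k a s.1 s.2 = Finsupp.single s 1 := dif_pos s.2.2

/-- The linear map with prescribed values on the vectors `blockVec`. -/
noncomputable def blockMap {V : Type*} [AddCommGroup V] [Module k V] (a : ℕ → ℕ)
    (v : Fin n → ℕ → V) : (BlockIndex n a →₀ k) →ₗ[k] V :=
  Finsupp.linearCombination k fun s => v s.1 s.2

theorem blockMap_apply {V : Type*} [AddCommGroup V] [Module k V] {a : ℕ → ℕ}
    (v : Fin n → ℕ → V) {j : Fin n} {t : ℕ} (h : t < a j) :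
    blockMap (k := k) a v (blockVec k a j t) = v j t := by
  simp [blockMap, blockVec, h]

/-- Cyclic rotation of every row by `m` steps. -/
def rotate (a : ℕ → ℕ) (m : ℕ) (s : BlockIndex n a) : BlockIndex n a :=
  ⟨s.1, ⟨(s.2 + m) % a s.1, Nat.mod_lt _ (Nat.zero_lt_of_lt s.2.2)⟩⟩

theorem rotate_injective (a : ℕ → ℕ) (m : ℕ) :
    Function.Injective (rotate (n := n) a m) := by
  rintro ⟨j, t⟩ ⟨j', t'⟩ h
  obtain rfl : j = j' := congrArg Sigma.fst h
  have h2 : (t + m) % a j = (t' + m) % a j := by simpa [rotate] using h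
  have h3 : (t : ℕ) % a j = t' % a j := Nat.ModEq.add_right_cancel' m h2
  rw [Nat.mod_eq_of_lt t.2, Nat.mod_eq_of_lt t'.2] at h3
  rw [Fin.ext h3]

theorem blockVec_mod {a : ℕ → ℕ} (m : ℕ) (s : BlockIndex n a) :
    blockVec k a s.1 ((s.2 + m) % a s.1) = Finsupp.single (rotate a m s) 1 :=
  dif_pos (Nat.mod_lt _ (Nat.zero_lt_of_lt s.2.2))

theorem card_filter_blockIndex (a : ℕ → ℕ) (p : ℕ → ℕ → Prop) [∀ j t, Decidable (p j t)] :
    (Finset.univ.filter fun s : BlockIndex n a => p s.1 s.2).card =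
      ∑ j ∈ Finset.range n, ((Finset.range (a j)).filter (p j)).card := by
  simp only [Finset.card_filter]
  rw [Fintype.sum_sigma, ← Fin.sum_univ_eq_sum_range
    (fun j => ∑ t ∈ Finset.range (a j), if p j t then 1 else 0)]
  refine Finset.sum_congr rfl fun j _ => ?_
  rw [← Fin.sum_univ_eq_sum_range (fun t => if p j t then 1 else 0)]

theorem finrank_blockIndex (a : ℕ → ℕ) :
    Module.finrank k (BlockIndex n a →₀ k) = ∑ j ∈ Finset.range n, a j := by
  simp [Fin.sum_univ_eq_sum_range]

/-- The nilpotent map moving every vector of a row to the next position of that row. -/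
noncomputable def shift (k : Type*) [Field k] (n : ℕ) (l : ℕ → ℕ) :
    (BlockIndex n l →₀ k) →ₗ[k] (BlockIndex n l →₀ k) :=
  blockMap l fun j t => blockVec k l j (t + 1)

theorem shift_blockVec (l : ℕ → ℕ) (j : Fin n) (t : ℕ) :
    shift k n l (blockVec k l j t) = blockVec k l j (t + 1) := by
  rcases lt_or_ge t (l j) with h | h
  · exact blockMap_apply _ h
  · rw [blockVec_of_le h, blockVec_of_le (by omega), map_zero]

theorem shift_pow_blockVec (l : ℕ → ℕ) (m : ℕ) (j : Fin n) (t : ℕ) :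
    (shift k n l ^ m) (blockVec k l j t) = blockVec k l j (t + m) := by
  induction m with
  | zero => simp
  | succ m ih => rw [pow_succ', Module.End.mul_apply, ih, shift_blockVec, add_assoc]

theorem finrank_range_shift_pow (l : ℕ → ℕ) (m : ℕ) :
    Module.finrank k (LinearMap.range (shift k n l ^ m)) = ∑ j ∈ Finset.range n, (l j - m) := by
  rw [finrank_range_of_partial_injection _
    (Finset.univ.filter fun s : BlockIndex n l => (s.2 : ℕ) + m < l s.1) (rotate l m)
    (rotate_injective l m), card_filter_blockIndex l (fun j t => t + m < l j)]
  · refine Finset.sum_congr rfl fun j _ => ?_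
    have : (Finset.range (l j)).filter (fun t => t + m < l j) = Finset.range (l j - m) := by
      ext t; simp; omega
    rw [this, Finset.card_range]
  · intro s hs
    rw [← blockVec_fin, shift_pow_blockVec, ← blockVec_mod, Nat.mod_eq_of_lt (by simpa using hs)]
  · intro s hs
    rw [← blockVec_fin, shift_pow_blockVec, blockVec_of_le (by simpa using hs)]

/-! ### The compression -/

/-- The inclusion of the truncated rows of lengths `a j` into the rows of lengths `l j`. -/
noncomputable def rowIncl (k : Type*) [Field k] (n : ℕ) (a l : ℕ → ℕ) :
    (BlockIndex n a →₀ k) →ₗ[k] (BlockIndex n l →₀ k) :=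
  blockMap a fun j t => blockVec k l j t

/-- The retraction onto the truncated rows reducing positions modulo `a j`. Rows with `a j = 0`
are sent to `0`, since `t % 0 = t` and `blockVec` vanishes beyond the end of a row. -/
noncomputable def rowRetract (k : Type*) [Field k] (n : ℕ) (a l : ℕ → ℕ) :
    (BlockIndex n l →₀ k) →ₗ[k] (BlockIndex n a →₀ k) :=
  blockMap l fun j t => blockVec k a j (t % a j)

theorem rowRetract_rowIncl {a l : ℕ → ℕ} (hal : ∀ j, a j ≤ l j) (w : BlockIndex n a →₀ k) :
    rowRetract k n a l (rowIncl k n a l w) = w := by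
  have : rowRetract k n a l ∘ₗ rowIncl k n a l = LinearMap.id := by
    refine Finsupp.lhom_ext' fun s => LinearMap.ext_ring ?_
    simp only [LinearMap.comp_apply, Finsupp.lsingle_apply, LinearMap.id_apply]
    rw [← blockVec_fin, rowIncl, blockMap_apply _ s.2.2, rowRetract,
      blockMap_apply _ (s.2.2.trans_le (hal _)), Nat.mod_eq_of_lt s.2.2]
  exact LinearMap.congr_fun this w

/-- The compression of the shift to the truncated rows. -/
noncomputable def compression (k : Type*) [Field k] (n : ℕ) (a l : ℕ → ℕ) :
    (BlockIndex n a →₀ k) →ₗ[k] (BlockIndex n a →₀ k) :=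
  rowRetract k n a l ∘ₗ shift k n l ∘ₗ rowIncl k n a l

theorem compression_blockVec {a l : ℕ → ℕ} {j : Fin n} {t : ℕ} (h : t < a j) :
    compression k n a l (blockVec k a j t) =
      if t + 1 < l j then blockVec k a j ((t + 1) % a j) else 0 := by
  rw [compression, LinearMap.comp_apply, LinearMap.comp_apply, rowIncl, blockMap_apply _ h,
    shift_blockVec]
  split_ifs with h1
  · exact blockMap_apply _ h1
  · rw [blockVec_of_le (by omega), map_zero]

/-- On a properly truncated row the compression is a cyclic permutation. -/
theorem compression_pow_of_lt {a l : ℕ → ℕ} {j : Fin n} (hj : a j < l j) (m : ℕ) {t : ℕ}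
    (h : t < a j) :
    (compression k n a l ^ m) (blockVec k a j t) = blockVec k a j ((t + m) % a j) := by
  induction m with
  | zero => simp [Nat.mod_eq_of_lt h]
  | succ m ih =>
    have hlt : (t + m) % a j < a j := Nat.mod_lt _ (by omega)
    rw [pow_succ', Module.End.mul_apply, ih, compression_blockVec hlt, if_pos (by omega),
      Nat.mod_add_mod, add_assoc]

/-- On a full row the compression is the nilpotent shift. -/
theorem compression_pow_of_eq {a l : ℕ → ℕ} {j : Fin n} (hj : a j = l j) (m t : ℕ) :
    (compression k n a l ^ m) (blockVec k a j t) = blockVec k a j (t + m) := by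
  induction m with
  | zero => simp
  | succ m ih =>
    rw [pow_succ', Module.End.mul_apply, ih]
    rcases lt_or_ge (t + m) (a j) with h | h
    · rw [compression_blockVec h]
      split_ifs with h1
      · rw [Nat.mod_eq_of_lt (by omega), add_assoc]
      · rw [blockVec_of_le (by omega)]
    · rw [blockVec_of_le h, map_zero, blockVec_of_le (by omega)]

theorem finrank_range_compression_pow {a l : ℕ → ℕ} {r i : ℕ} (hr : r ≤ n)
    (hlt : ∀ j, j < r → 0 < a j → a j < l j) (heq : ∀ j, r ≤ j → a j = l j)
    (hsum : ∑ j ∈ Finset.range n, a j = i) :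
    Module.finrank k (LinearMap.range (compression k n a l ^ i)) =
      ∑ j ∈ Finset.range r, a j := by
  rw [finrank_range_of_partial_injection _
    (Finset.univ.filter fun s : BlockIndex n a => (s.1 : ℕ) < r) (rotate a i)
    (rotate_injective a i), card_filter_blockIndex a (fun j _ => j < r)]
  · rw [← Finset.sum_range_add_sum_Ico _ hr, Finset.sum_congr rfl (g := a),
      Finset.sum_eq_zero (s := Finset.Ico r n)]
    · simp
    · intro j hj
      have := (Finset.mem_Ico.mp hj).1
      simp [Nat.not_lt.mpr this]
    · intro j hj
      have := Finset.mem_range.mp hj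
      simp [this]
  · intro s hs
    rw [← blockVec_fin, ← blockVec_mod]
    exact compression_pow_of_lt (hlt _ (by simpa using hs) (Nat.zero_lt_of_lt s.2.2)) _ s.2.2
  · intro s hs
    have hle : a s.1 ≤ i := hsum ▸
      Finset.single_le_sum (f := a) (fun _ _ => Nat.zero_le _) (Finset.mem_range.mpr s.1.2)
    rw [← blockVec_fin, compression_pow_of_eq (heq _ (by simpa using hs)),
      blockVec_of_le (by omega)]

end Block

/-- For any partition `λ` of `n` and any `1 ≤ i ≤ n - 1` there exists a nilpotent `n × n`
matrix `X` of Jordan type `λ` such that the stable rank of `X_{≤i,≤i}` equals `d_{λ,i}`. -/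
theorem exists_jordanType_with_stable_rank_eq_dPart {k : Type*} [Field k] (n : ℕ)
    (l : ℕ → ℕ) (hl : IsPartition n l) (i : ℕ) (hi1 : 1 ≤ i) (hin : i < n) :
    ∃ X : Matrix (Fin n) (Fin n) k, IsNilpotent X ∧ HasJordanType X l ∧
      ((X.submatrix (Fin.castLE hin.le) (Fin.castLE hin.le)) ^ i).rank = dPart n l i := by
  obtain ⟨a, hal, hlt, heq, hd, hsum⟩ := exists_compression_sizes n l hl i hi1 hin
  have hV : Module.finrank k (BlockIndex n l →₀ k) = n := by
    rw [finrank_blockIndex, hl.2.2]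
  have hW : Module.finrank k (BlockIndex n a →₀ k) = i := by
    rw [finrank_blockIndex, hsum]
  let g : Module.Basis (Fin i) k (BlockIndex n a →₀ k) := Module.finBasisOfFinrankEq k _ hW
  obtain ⟨b, hb, hbr⟩ := exists_basis_of_retraction hin.le (rowIncl k n a l) (rowRetract k n a l)
    (rowRetract_rowIncl hal) hV g
  have hrank : HasJordanType (LinearMap.toMatrix b b (shift k n l)) l := fun m => by
    rw [rank_toMatrix_pow, finrank_range_shift_pow]
  have hsub : (LinearMap.toMatrix b b (shift k n l)).submatrix (Fin.castLE hin.le)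
      (Fin.castLE hin.le) = LinearMap.toMatrix g g (compression k n a l) := by
    ext p q
    rw [Matrix.submatrix_apply, LinearMap.toMatrix_apply, LinearMap.toMatrix_apply, hb, hbr]
    rfl
  refine ⟨LinearMap.toMatrix b b (shift k n l), ⟨n, ?_⟩, hrank, ?_⟩
  -- all parts are at most `n`, so the rank formula gives rank `0` for the `n`-th power
  · have hzero : (LinearMap.toMatrix b b (shift k n l) ^ n).rank = 0 →
        LinearMap.toMatrix b b (shift k n l) ^ n = 0 := by
      intro h
      rw [rank_toMatrix_pow, Submodule.finrank_eq_zero, LinearMap.range_eq_bot] at h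
      rw [LinearMap.toMatrix_pow, h, map_zero]
    apply hzero
    rw [hrank n]
    refine Finset.sum_eq_zero fun j hj => Nat.sub_eq_zero_of_le ?_
    calc l j ≤ ∑ j ∈ Finset.range n, l j :=
          Finset.single_le_sum (f := l) (fun _ _ => Nat.zero_le _) hj
      _ = n := hl.2.2
  · rw [hsub, rank_toMatrix_pow, finrank_range_compression_pow (Nat.sub_le n i) hlt heq hsum, hd]
end

section
/- Let k be a field, let λ be a partition of n, and let 1 ≤ i ≤ n−1. Then: (a) for every nilpotent n×n matrix X over k of Jordan type λ and every j with d_{λ,i} < j ≤ i, one has s_j(X_{≤i,≤i}) = 0; and (b) there exists a nilpotent n×n matrix X over k of Jordan type λ with s_{d_{λ,i}}(X_{≤i,≤i}) ≠ 0. -/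
/-- `s_j(Y)`, the trace of the `j`-th exterior power of `Y` (the sum of the principal
`j × j` minors of `Y`), characterized by
`det (a • 1 - Y) = a^i + ∑_{j=1}^{i} (-1)^j a^(i-j) s_j(Y)`; i.e. up to sign it is a
coefficient of the characteristic polynomial: `s_j(Y) = (-1)^j * (charpoly Y).coeff (i - j)`. -/
noncomputable def sElem {k : Type*} [Field k] {i : ℕ} (Y : Matrix (Fin i) (Fin i) k)
    (j : ℕ) : k :=
  (-1) ^ j * (Matrix.charpoly Y).coeff (i - j)

/-! ### Subspaces generated under a nilpotent map, and compressions -/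

open Module in
lemma finrank_map_add_inf_ker {k V V' : Type*} [Field k] [AddCommGroup V] [Module k V]
    [FiniteDimensional k V] [AddCommGroup V'] [Module k V'] (g : V →ₗ[k] V')
    (S : Submodule k V) :
    finrank k (S.map g) + finrank k (S ⊓ LinearMap.ker g : Submodule k V) = finrank k S := by
  have h := LinearMap.finrank_range_add_finrank_ker (g.domRestrict S)
  rw [LinearMap.range_domRestrict] at h
  rw [← h, LinearMap.ker_domRestrict, add_right_inj]
  have := S.finrank_map_subtype_eq (Submodule.comap S.subtype (LinearMap.ker g))
  rw [Submodule.map_comap_subtype] at this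
  exact this

/-- The smallest `f`-invariant subspace containing `W`, i.e. the `k[f]`-submodule generated
by `W`. -/
def cyclicHull {k V : Type*} [Field k] [AddCommGroup V] [Module k V] (f : Module.End k V)
    (W : Submodule k V) : Submodule k V :=
  ⨆ m : ℕ, W.map (f ^ m)

lemma cyclicHull_eq {k V : Type*} [Field k] [AddCommGroup V] [Module k V] (f : Module.End k V)
    (W : Submodule k V) : W ⊔ (cyclicHull f W).map f = cyclicHull f W := by
  unfold cyclicHull
  rw [Submodule.map_iSup, ← sup_iSup_nat_succ (fun m : ℕ => W.map (f ^ m))]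
  congr 1
  · simp [Module.End.one_eq_id]
  · congr 1
    ext1 m
    rw [← Submodule.map_comp, pow_succ', Module.End.mul_eq_comp]

open Module in
/-- Bound for the dimension of the `k[f]`-submodule `S` generated by `W`. The layer
`f^m S / f^(m+1) S` is generated by the image of `W`, and it has the dimension of
`ker f ∩ f^m S`, which is at most that of `ker f ∩ range f^m`. -/
lemma finrank_cyclicHull_le {k V : Type*} [Field k] [AddCommGroup V] [Module k V]
    [FiniteDimensional k V] (f : Module.End k V) (W : Submodule k V) (N : ℕ) (hN : f ^ N = 0)
    (c : ℕ → ℕ)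
    (hc : ∀ m, finrank k W ≤ c m ∨
      finrank k (LinearMap.range (f ^ m)) ≤ finrank k (LinearMap.range (f ^ (m + 1))) + c m) :
    finrank k (cyclicHull f W) ≤ ∑ m ∈ Finset.range N, c m := by
  set S := cyclicHull f W with hS
  have hsucc (m : ℕ) (T : Submodule k V) : T.map (f ^ (m + 1)) = (T.map (f ^ m)).map f := by
    rw [← Submodule.map_comp, pow_succ', Module.End.mul_eq_comp]
  have step (m : ℕ) :
      finrank k (S.map (f ^ m)) ≤ finrank k (S.map (f ^ (m + 1))) + c m := by
    rcases hc m with h | h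
    · have h1 : S.map (f ^ m) = W.map (f ^ m) ⊔ S.map (f ^ (m + 1)) := by
        conv_lhs => rw [hS, ← cyclicHull_eq, ← hS]
        rw [Submodule.map_sup, ← Submodule.map_comp, pow_succ, Module.End.mul_eq_comp]
      have h2 := Submodule.finrank_add_le_finrank_add_finrank (W.map (f ^ m))
        (S.map (f ^ (m + 1)))
      have h3 := Submodule.finrank_map_le (f ^ m) W
      rw [h1]
      omega
    · have h1 := finrank_map_add_inf_ker f (S.map (f ^ m))
      have h2 := finrank_map_add_inf_ker f ((⊤ : Submodule k V).map (f ^ m))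
      have h3 : finrank k (S.map (f ^ m) ⊓ LinearMap.ker f : Submodule k V) ≤
          finrank k ((⊤ : Submodule k V).map (f ^ m) ⊓ LinearMap.ker f : Submodule k V) :=
        Submodule.finrank_mono (inf_le_inf_right _ (Submodule.map_mono le_top))
      rw [← hsucc] at h1 h2
      rw [Submodule.map_top, Submodule.map_top] at h2
      rw [Submodule.map_top] at h3
      omega
  have key (m : ℕ) :
      finrank k S ≤ finrank k (S.map (f ^ m)) + ∑ m ∈ Finset.range m, c m := by
    induction m with
    | zero =>
      have h0 : S.map (f ^ 0) = S := by
        rw [pow_zero, Module.End.one_eq_id, Submodule.map_id]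
      rw [h0]
      exact Nat.le_add_right _ _
    | succ m ih =>
      rw [Finset.sum_range_succ]
      have := step m
      omega
  have h0 : S.map (f ^ N) = ⊥ := by rw [hN, Submodule.map_zero]
  have := key N
  rwa [h0, finrank_bot, zero_add] at this

open Module in
/-- If `p ∘ e = id`, the compression `p ∘ f ∘ e` of a nilpotent `f` acts nilpotently modulo the
`k[f]`-submodule generated by `W = ker p`. Hence the rank of its high powers is at most
`dim k[f]W - dim W`. -/
lemma finrank_range_compression_pow_s6 {k V U : Type*} [Field k] [AddCommGroup V] [Module k V]
    [FiniteDimensional k V] [AddCommGroup U] [Module k U] [FiniteDimensional k U]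
    (f : Module.End k V) (e : U →ₗ[k] V) (p : V →ₗ[k] U) (hpe : ∀ u, p (e u) = u)
    (N : ℕ) (hN : f ^ N = 0) (Y : Module.End k U) (hY : ∀ u, Y u = p (f (e u))) :
    finrank k (LinearMap.range (Y ^ N)) + finrank k (LinearMap.ker p) ≤
      finrank k (cyclicHull f (LinearMap.ker p)) := by
  set W := LinearMap.ker p with hW
  set S := cyclicHull f W with hS
  have hWS : W ≤ S := by rw [hS, ← cyclicHull_eq]; exact le_sup_left
  have hfS : S.map f ≤ S := by
    conv_rhs => rw [hS, ← cyclicHull_eq]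
    exact le_sup_right
  have key (m : ℕ) (u : U) : e ((Y ^ m) u) - (f ^ m) (e u) ∈ S := by
    induction m with
    | zero => simp
    | succ m ih =>
      rw [pow_succ', pow_succ', Module.End.mul_apply, Module.End.mul_apply]
      have h1 : e (Y ((Y ^ m) u)) - f (e ((Y ^ m) u)) ∈ S := by
        apply hWS
        rw [hW, LinearMap.mem_ker, map_sub, hpe, hY, sub_self]
      have h2 := hfS (Submodule.mem_map_of_mem (f := f) ih)
      have := S.add_mem h1 h2
      simpa using this
  have hle : LinearMap.range (Y ^ N) ≤ S.map p := by
    rintro _ ⟨u, rfl⟩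
    refine ⟨e ((Y ^ N) u), ?_, hpe _⟩
    simpa [hN] using key N u
  have h1 := finrank_map_add_inf_ker p S
  rw [← hW, inf_eq_right.mpr hWS] at h1
  have h2 := Submodule.finrank_mono hle
  omega

open Module in
/-- The dimension `i - rank Y^N` of `ker Y^N` is at most the order of vanishing at `0` of the
characteristic polynomial of `Y`, with equality for some exponent. -/
lemma natTrailingDegree_charpoly_eq {k : Type*} [Field k] {i : ℕ} (Y : Matrix (Fin i) (Fin i) k)
    (N : ℕ) :
    i ≤ Y.charpoly.natTrailingDegree + finrank k (LinearMap.range (Y.toLin' ^ N)) ∧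
    (∃ M, Y.charpoly.natTrailingDegree + finrank k (LinearMap.range (Y.toLin' ^ M)) = i) := by
  have h := LinearMap.finrank_maxGenEigenspace_zero_eq (Y.toLin')
  rw [Matrix.charpoly_toLin'] at h
  have hrn (M : ℕ) := LinearMap.finrank_range_add_finrank_ker (Y.toLin' ^ M)
  simp only [finrank_fin_fun] at hrn
  have hk (M : ℕ) : Module.End.genEigenspace Y.toLin' 0 M = LinearMap.ker (Y.toLin' ^ M) := by
    rw [Module.End.genEigenspace_nat]; simp
  constructor
  · have h1 := Submodule.finrank_mono (Module.End.genEigenspace_le_maximal Y.toLin' 0 N)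
    rw [hk] at h1
    have := hrn N
    omega
  · rw [Module.End.maxGenEigenspace_eq_genEigenspace_finrank, hk] at h
    exact ⟨_, by rw [← h, add_comm]; exact hrn _⟩

/-! ### Parts of a partition -/

/-- `#{j < r : m < λ_j}` is at least `min (r, λ'_{m+1})`, where the part `λ'_{m+1}` of the
conjugate partition is written as a difference of consecutive ranks. -/
lemma layer_bound {n : ℕ} {l : ℕ → ℕ} (hl : Antitone l) (r m : ℕ) :
    r ≤ ∑ j ∈ Finset.range r, (if m < l j then 1 else 0) ∨
    ∑ j ∈ Finset.range n, (l j - m) ≤ ∑ j ∈ Finset.range n, (l j - (m + 1)) +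
      ∑ j ∈ Finset.range r, (if m < l j then 1 else 0) := by
  by_cases h : ∀ j < r, m < l j
  · left
    rw [Finset.sum_congr rfl (fun j hj => if_pos (h j (Finset.mem_range.mp hj)))]
    simp
  · right
    push Not at h
    obtain ⟨j0, hj0, hlj0⟩ := h
    have h1 : ∑ j ∈ Finset.range n, (l j - m) ≤ ∑ j ∈ Finset.range n, (l j - (m + 1)) +
        ∑ j ∈ Finset.range n, (if m < l j then 1 else 0) := by
      rw [← Finset.sum_add_distrib]
      apply Finset.sum_le_sum
      intro j _
      split_ifs <;> omega
    refine h1.trans (Nat.add_le_add_left ?_ _)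
    rw [← Finset.sum_filter, ← Finset.sum_filter]
    apply Finset.sum_le_sum_of_subset
    intro j hj
    simp only [Finset.mem_filter, Finset.mem_range] at hj ⊢
    refine ⟨?_, hj.2⟩
    by_contra hjr
    have := hl (show j0 ≤ j by omega)
    omega

lemma sum_layers_le (l : ℕ → ℕ) (r N : ℕ) :
    ∑ m ∈ Finset.range N, ∑ j ∈ Finset.range r, (if m < l j then 1 else 0) ≤
      ∑ j ∈ Finset.range r, l j := by
  rw [Finset.sum_comm]
  apply Finset.sum_le_sum
  intro j _
  rw [← Finset.sum_filter, Finset.sum_const, smul_eq_mul, mul_one]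
  calc _ ≤ (Finset.range (l j)).card := Finset.card_le_card (by
        intro m hm
        simp only [Finset.mem_filter, Finset.mem_range] at hm ⊢
        exact hm.2)
    _ = l j := Finset.card_range _

lemma IsPartition.head_add_tail {n : ℕ} {l : ℕ → ℕ} (hl : IsPartition n l) {i : ℕ} (hin : i < n) :
    ∑ j ∈ Finset.range (n - i), l j + ∑ j ∈ Finset.Ico (n - i) n, l j = n := by
  rw [Finset.sum_range_add_sum_Ico _ (by omega), hl.2.2]

/-- If some `λ_j` with `j ≤ n - i` vanishes, the first `n - i` parts already sum to `n`. -/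
lemma IsPartition.le_head {n : ℕ} {l : ℕ → ℕ} (hl : IsPartition n l) {i : ℕ} (hin : i < n) :
    n - i ≤ ∑ j ∈ Finset.range (n - i), l j := by
  by_cases h : ∀ j < n - i, 1 ≤ l j
  · calc n - i = ∑ j ∈ Finset.range (n - i), 1 := by simp
      _ ≤ _ := Finset.sum_le_sum fun j hj => h j (Finset.mem_range.mp hj)
  · push Not at h
    obtain ⟨j0, hj0, hlj0⟩ := h
    have h0 : ∑ j ∈ Finset.Ico (n - i) n, l j = 0 := by
      apply Finset.sum_eq_zero
      intro j hj
      have := hl.1 (show j0 ≤ j by have := Finset.mem_Ico.mp hj; omega)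
      omega
    have := hl.head_add_tail hin
    omega

/-! ### Vanishing -/

open Module in
/-- For `X` of type `λ`, the order of vanishing at `0` of the characteristic polynomial of
`X_{≤i,≤i}` is at least `λ_{n-i+1} + ⋯ + λ_n`. -/
lemma tail_le_natTrailingDegree {k : Type*} [Field k] {n : ℕ} {l : ℕ → ℕ}
    (hl : IsPartition n l) {i : ℕ} (hin : i < n) (X : Matrix (Fin n) (Fin n) k)
    (hX : IsNilpotent X) (hJ : HasJordanType X l) :
    ∑ j ∈ Finset.Ico (n - i) n, l j ≤
      (X.submatrix (Fin.castLE hin.le) (Fin.castLE hin.le)).charpoly.natTrailingDegree := by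
  obtain ⟨N, hN⟩ := hX
  set Y := X.submatrix (Fin.castLE hin.le) (Fin.castLE hin.le) with hYdef
  -- `p` restricts a vector to its first `i` coordinates, `e` extends a vector by zero
  let p : (Fin n → k) →ₗ[k] (Fin i → k) := LinearMap.funLeft k k (Fin.castLE hin.le)
  let e : (Fin i → k) →ₗ[k] (Fin n → k) :=
    Function.ExtendByZero.linearMap k (Fin.castLE hin.le)
  have hinj : Function.Injective (Fin.castLE hin.le) := Fin.castLE_injective _
  have hpe (u) : p (e u) = u := by
    ext a
    exact hinj.extend_apply u 0 a
  have hY (u) : Y.toLin' u = p (X.toLin' (e u)) := by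
    ext a
    have hpa (v : Fin n → k) : p v a = v (Fin.castLE hin.le a) := rfl
    rw [hpa, Matrix.toLin'_apply, Matrix.toLin'_apply, Matrix.mulVec, Matrix.mulVec, dotProduct,
      dotProduct]
    refine (Finset.sum_of_injOn (Fin.castLE hin.le) hinj.injOn (by simp) ?_ ?_)
    · intro b _ hb
      have : e u b = 0 := Function.extend_apply' _ _ _ (by
        rintro ⟨a, ha⟩
        exact hb ⟨a, by simp, ha⟩)
      rw [this, mul_zero]
    · intro b _
      have : e u (Fin.castLE hin.le b) = u b := hinj.extend_apply u 0 b
      rw [this, hYdef, Matrix.submatrix_apply]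
  have hfN : X.toLin' ^ N = 0 := by rw [← Matrix.toLin'_pow, hN, map_zero]
  have hker : finrank k (LinearMap.ker p) = n - i := by
    have h := LinearMap.finrank_range_add_finrank_ker p
    rw [LinearMap.range_eq_top.mpr (fun u => ⟨e u, hpe u⟩), finrank_top] at h
    simp only [finrank_fin_fun] at h
    omega
  have h1 := finrank_range_compression_pow_s6 X.toLin' e p hpe N hfN Y.toLin' hY
  have hrk (m : ℕ) : finrank k (LinearMap.range (X.toLin' ^ m)) =
      ∑ j ∈ Finset.range n, (l j - m) := by
    rw [← hJ m, ← Matrix.toLin'_pow]; rfl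
  have h2 := finrank_cyclicHull_le X.toLin' (LinearMap.ker p) N hfN
    (fun m => ∑ j ∈ Finset.range (n - i), (if m < l j then 1 else 0)) (by
      intro m
      rw [hrk, hrk, hker]
      exact layer_bound hl.1 _ _)
  have h3 := sum_layers_le l (n - i) N
  have h4 := (natTrailingDegree_charpoly_eq Y N).1
  have h5 := hl.head_add_tail hin
  omega

/-! ### A nilpotent matrix of type `λ` with nonvanishing coefficient -/

/-- The boxes `(j, a)`, `a < λ_j`, of the Young diagram of `λ`. -/
def boxes (n : ℕ) (l : ℕ → ℕ) : Finset (Σ _ : ℕ, ℕ) :=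
  (Finset.range n).sigma fun j => Finset.range (l j)

lemma mem_boxes {n : ℕ} {l : ℕ → ℕ} {x : Σ _ : ℕ, ℕ} :
    x ∈ boxes n l ↔ x.1 < n ∧ x.2 < l x.1 := by
  simp [boxes]

/-- The matrix of the `m`-fold shift `(j, a) ↦ (j, a + m)` along the rows of the Young diagram,
where boxes leaving the diagram are sent to `0`. It is the `m`-th power of the Jordan normal form
of type `λ`. -/
def shiftMat (k : Type*) [Field k] (n : ℕ) (l : ℕ → ℕ) (m : ℕ) :
    Matrix (boxes n l) (boxes n l) k :=
  Matrix.of fun x y => if x.1.1 = y.1.1 ∧ x.1.2 = y.1.2 + m then 1 else 0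

lemma box_ext {n : ℕ} {l : ℕ → ℕ} {x y : boxes n l} (h1 : x.1.1 = y.1.1) (h2 : x.1.2 = y.1.2) :
    x = y := by
  obtain ⟨⟨a, b⟩, hx⟩ := x
  obtain ⟨⟨c, d⟩, hy⟩ := y
  simp only at h1 h2
  subst h1 h2
  rfl

lemma shiftMat_mul (k : Type*) [Field k] (n : ℕ) (l : ℕ → ℕ) (m : ℕ) :
    shiftMat k n l m * shiftMat k n l 1 = shiftMat k n l (m + 1) := by
  ext x z
  rw [Matrix.mul_apply]
  have hx := mem_boxes.mp x.2
  have hz := mem_boxes.mp z.2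
  by_cases h : z.1.2 + 1 < l z.1.1
  · rw [Finset.sum_eq_single (⟨⟨z.1.1, z.1.2 + 1⟩, mem_boxes.mpr ⟨hz.1, h⟩⟩ : boxes n l)]
    · simp [shiftMat, add_assoc, add_comm 1 m]
    · intro y _ hy
      have : ¬ (y.1.1 = z.1.1 ∧ y.1.2 = z.1.2 + 1) := fun h' => hy (box_ext h'.1 h'.2)
      simp [shiftMat, this]
    · simp
  · rw [Finset.sum_eq_zero]
    · have : ¬ (x.1.1 = z.1.1 ∧ x.1.2 = z.1.2 + (m + 1)) := by
        rintro ⟨h1, h2⟩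
        rw [← h1] at h
        omega
      simp [shiftMat, this]
    · intro y _
      have hy := mem_boxes.mp y.2
      have : ¬ (y.1.1 = z.1.1 ∧ y.1.2 = z.1.2 + 1) := by
        rintro ⟨h1, h2⟩
        rw [← h1] at h
        omega
      simp [shiftMat, this]

lemma shiftMat_one_pow (k : Type*) [Field k] (n : ℕ) (l : ℕ → ℕ) (m : ℕ) :
    shiftMat k n l 1 ^ m = shiftMat k n l m := by
  induction m with
  | zero =>
    ext x y
    rw [pow_zero, Matrix.one_apply]
    by_cases h : x = y
    · simp [shiftMat, h]
    · have : ¬ (x.1.1 = y.1.1 ∧ x.1.2 = y.1.2 + 0) := fun h' => h (box_ext h'.1 h'.2)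
      rw [if_neg h]
      simp only [shiftMat, Matrix.of_apply, if_neg this]
  | succ m ih => rw [pow_succ, ih, shiftMat_mul]

/-- The column space of the `m`-fold shift is spanned by the boxes outside the first `m`
columns of the diagram. -/
lemma rank_shiftMat (k : Type*) [Field k] (n : ℕ) (l : ℕ → ℕ) (m : ℕ) :
    (shiftMat k n l m).rank = ∑ j ∈ Finset.range n, (l j - m) := by
  have hspan : Submodule.span k (Set.range (shiftMat k n l m).col) =
      Pi.spanSubset k {x : boxes n l | m ≤ x.1.2} := by
    unfold Pi.spanSubset
    apply le_antisymm
    · rw [Submodule.span_le]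
      rintro _ ⟨y, rfl⟩
      have hy := mem_boxes.mp y.2
      by_cases h : y.1.2 + m < l y.1.1
      · apply Submodule.subset_span
        refine ⟨⟨⟨y.1.1, y.1.2 + m⟩, mem_boxes.mpr ⟨hy.1, h⟩⟩, by simp, ?_⟩
        ext x
        rw [Pi.basisFun_apply, Pi.single_apply, Matrix.col_apply, shiftMat, Matrix.of_apply]
        refine if_congr ⟨?_, ?_⟩ rfl rfl
        · rintro rfl
          exact ⟨rfl, rfl⟩
        · exact fun h' => box_ext h'.1 h'.2
      · have : (shiftMat k n l m).col y = 0 := by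
          ext x
          have hx := mem_boxes.mp x.2
          have : ¬ (x.1.1 = y.1.1 ∧ x.1.2 = y.1.2 + m) := by
            rintro ⟨h1, h2⟩
            rw [← h1] at h
            omega
          simp [Matrix.col_apply, shiftMat, this]
        rw [this]
        exact Submodule.zero_mem _
    · rw [Submodule.span_le]
      rintro _ ⟨x, hx, rfl⟩
      have hx' : m ≤ x.1.2 := hx
      have hxm := mem_boxes.mp x.2
      apply Submodule.subset_span
      refine ⟨⟨⟨x.1.1, x.1.2 - m⟩, mem_boxes.mpr ⟨hxm.1, by dsimp only; omega⟩⟩, ?_⟩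
      ext y
      rw [Pi.basisFun_apply, Pi.single_apply, Matrix.col_apply, shiftMat, Matrix.of_apply]
      refine if_congr ⟨?_, ?_⟩ rfl rfl
      · exact fun h' => box_ext h'.1 (by have := h'.2; dsimp only at this; omega)
      · rintro rfl
        exact ⟨rfl, by dsimp only; omega⟩
  rw [Matrix.rank, Matrix.range_mulVecLin, hspan, Pi.dim_spanSubset]
  have himg : Subtype.val '' {x : boxes n l | m ≤ x.1.2} =
      (((Finset.range n).sigma fun j => Finset.Ico m (l j) : Finset (Σ _ : ℕ, ℕ)) :
        Set (Σ _ : ℕ, ℕ)) := by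
    ext x
    simp only [Set.mem_image, Set.mem_ofPred_eq, Subtype.exists, exists_and_right,
      exists_eq_right, mem_boxes, Finset.coe_sigma, Set.mem_sigma_iff, Finset.mem_coe,
      Finset.mem_range, Finset.mem_Ico]
    tauto
  rw [← Set.ncard_image_of_injective _ Subtype.val_injective, himg, Set.ncard_coe_finset,
    Finset.card_sigma]
  simp

/-- The nilpotent matrix with `1` at row `(j, q_j - 1)` and column `(j, λ_j - 1)`, for every `j`
with `1 ≤ q_j < λ_j`. Conjugation by `1 + twistMat` replaces the last basis vector of each such
Jordan block by its sum with the `q_j`-th one. -/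
def twistMat (k : Type*) [Field k] (n : ℕ) (l q : ℕ → ℕ) :
    Matrix (boxes n l) (boxes n l) k :=
  Matrix.of fun x y =>
    if x.1.1 = y.1.1 ∧ x.1.2 + 1 = q x.1.1 ∧ y.1.2 + 1 = l y.1.1 ∧ q y.1.1 < l y.1.1 then 1 else 0

lemma twistMat_mul_self (k : Type*) [Field k] (n : ℕ) (l q : ℕ → ℕ) :
    twistMat k n l q * twistMat k n l q = 0 := by
  ext x z
  rw [Matrix.mul_apply, Matrix.zero_apply]
  apply Finset.sum_eq_zero
  intro y _
  by_cases h : y.1.2 + 1 = l y.1.1 ∧ q y.1.1 < l y.1.1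
  · have : ¬ y.1.2 + 1 = q y.1.1 := by omega
    simp [twistMat, this]
  · simp [twistMat, h]

/-- The unit `1 + twistMat`, with inverse `1 - twistMat`. -/
def twistUnit (k : Type*) [Field k] (n : ℕ) (l q : ℕ → ℕ) :
    (Matrix (boxes n l) (boxes n l) k)ˣ where
  val := 1 + twistMat k n l q
  inv := 1 - twistMat k n l q
  val_inv := by
    have := twistMat_mul_self k n l q
    simp [mul_sub, add_mul, this]
  inv_val := by
    have := twistMat_mul_self k n l q
    simp [sub_mul, mul_add, this]

/-- A conjugate of the Jordan normal form of type `λ`. -/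
def modelMat (k : Type*) [Field k] (n : ℕ) (l q : ℕ → ℕ) :
    Matrix (boxes n l) (boxes n l) k :=
  (1 - twistMat k n l q) * shiftMat k n l 1 * (1 + twistMat k n l q)

lemma modelMat_pow (k : Type*) [Field k] (n : ℕ) (l q : ℕ → ℕ) (m : ℕ) :
    modelMat k n l q ^ m =
      (1 - twistMat k n l q) * shiftMat k n l m * (1 + twistMat k n l q) := by
  rw [← shiftMat_one_pow k n l m]
  exact Units.conj_pow' (twistUnit k n l q) _ m

lemma rank_modelMat_pow (k : Type*) [Field k] (n : ℕ) (l q : ℕ → ℕ) (m : ℕ) :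
    (modelMat k n l q ^ m).rank = ∑ j ∈ Finset.range n, (l j - m) := by
  have h1 : IsUnit (1 + twistMat k n l q).det :=
    (Matrix.isUnit_iff_isUnit_det _).mp (twistUnit k n l q).isUnit
  have h2 : IsUnit (1 - twistMat k n l q).det :=
    (Matrix.isUnit_iff_isUnit_det _).mp (twistUnit k n l q)⁻¹.isUnit
  rw [modelMat_pow, Matrix.rank_mul_eq_left_of_isUnit_det _ _ h1,
    Matrix.rank_mul_eq_right_of_isUnit_det _ _ h2, rank_shiftMat]

/-- In rows `x` with `q ≤ x.2` the left factor `1 - twistMat` is invisible. -/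
lemma modelMat_apply (k : Type*) [Field k] {n : ℕ} {l q : ℕ → ℕ} {x : boxes n l}
    (hx : q x.1.1 ≤ x.1.2) (y : boxes n l) :
    modelMat k n l q x y =
      shiftMat k n l 1 x y + ∑ z, shiftMat k n l 1 x z * twistMat k n l q z y := by
  have h0 (z : boxes n l) : twistMat k n l q x z = 0 := by
    have : ¬ x.1.2 + 1 = q x.1.1 := by omega
    simp [twistMat, this]
  have h1 (A : Matrix (boxes n l) (boxes n l) k) : (twistMat k n l q * A) x y = 0 := by
    rw [Matrix.mul_apply]
    exact Finset.sum_eq_zero fun z _ => by rw [h0, zero_mul]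
  rw [modelMat, mul_assoc, sub_mul, one_mul, Matrix.sub_apply, h1, sub_zero, mul_add, mul_one,
    Matrix.add_apply, Matrix.mul_apply]

/-- The compression of `modelMat` to the boxes `(j, a)` with `q_j ≤ a` permutes cyclically those
in a row `j` with `1 ≤ q_j`; in particular each of them has a preimage of the same kind. -/
lemma exists_preimage_modelMat (k : Type*) [Field k] {n : ℕ} {l q : ℕ → ℕ} (x : boxes n l)
    (hx : q x.1.1 ≤ x.1.2) (hq : 1 ≤ q x.1.1) :
    ∃ y : boxes n l, y.1.1 = x.1.1 ∧ q y.1.1 ≤ y.1.2 ∧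
      ∀ x' : boxes n l, q x'.1.1 ≤ x'.1.2 →
        modelMat k n l q x' y = if x' = x then 1 else 0 := by
  have hxm := mem_boxes.mp x.2
  rcases hx.lt_or_eq with h | h
  · refine ⟨⟨⟨x.1.1, x.1.2 - 1⟩, mem_boxes.mpr ⟨hxm.1, by dsimp only; omega⟩⟩, rfl,
      by dsimp only; omega, ?_⟩
    intro x' hx'
    rw [modelMat_apply k hx', Finset.sum_eq_zero, add_zero]
    · rw [shiftMat, Matrix.of_apply]
      refine if_congr ⟨?_, ?_⟩ rfl rfl
      · exact fun h' => box_ext h'.1 (by have := h'.2; dsimp only at this; omega)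
      · rintro rfl
        exact ⟨rfl, by dsimp only; omega⟩
    · intro z _
      have : ¬ (x.1.2 - 1 + 1 = l x.1.1) := by omega
      simp [twistMat, this]
  · refine ⟨⟨⟨x.1.1, l x.1.1 - 1⟩, mem_boxes.mpr ⟨hxm.1, by dsimp only; omega⟩⟩, rfl,
      by dsimp only; omega, ?_⟩
    intro x' hx'
    have hxm' := mem_boxes.mp x'.2
    rw [modelMat_apply k hx',
      Finset.sum_eq_single (⟨⟨x.1.1, q x.1.1 - 1⟩,
        mem_boxes.mpr ⟨hxm.1, by dsimp only; omega⟩⟩ : boxes n l)]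
    · have h1 : ¬ (x'.1.1 = x.1.1 ∧ x'.1.2 = l x.1.1) := by
        rintro ⟨h1, h2⟩
        rw [h1] at hxm'
        omega
      have h2 : q x.1.1 - 1 + 1 = q x.1.1 := by omega
      have h3 : l x.1.1 - 1 + 1 = l x.1.1 := by omega
      have h4 : q x.1.1 < l x.1.1 := by omega
      simp only [shiftMat, twistMat, Matrix.of_apply, h2, h3, h4, h1, and_self, if_true, if_false,
        mul_one, zero_add]
      refine if_congr ⟨?_, ?_⟩ rfl rfl
      · exact fun h' => box_ext h'.1 (by omega)
      · rintro rfl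
        exact ⟨rfl, h.symm⟩
    · intro z _ hz
      have : ¬ (z.1.1 = x.1.1 ∧ z.1.2 + 1 = q z.1.1) := by
        rintro ⟨h1, h2⟩
        exact hz (box_ext h1 (by rw [h1] at h2; dsimp only; omega))
      have : twistMat k n l q z ⟨⟨x.1.1, l x.1.1 - 1⟩,
          mem_boxes.mpr ⟨hxm.1, by dsimp only; omega⟩⟩ = 0 := by
        rw [twistMat, Matrix.of_apply, if_neg]
        exact fun h' => this ⟨h'.1, h'.2.1⟩
      rw [this, mul_zero]
    · simp

lemma exists_between_with_sum (n : ℕ) (lo hi : ℕ → ℕ) (h : ∀ j, lo j ≤ hi j) (t : ℕ)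
    (h1 : ∑ j ∈ Finset.range n, lo j ≤ t) (h2 : t ≤ ∑ j ∈ Finset.range n, hi j) :
    ∃ q : ℕ → ℕ, (∀ j, lo j ≤ q j ∧ q j ≤ hi j) ∧ ∑ j ∈ Finset.range n, q j = t := by
  induction n generalizing t with
  | zero => exact ⟨lo, fun j => ⟨le_rfl, h j⟩, by simp at h1 h2 ⊢; omega⟩
  | succ n ih =>
    rw [Finset.sum_range_succ] at h1 h2
    have hn := h n
    have hle : ∑ j ∈ Finset.range n, lo j ≤ ∑ j ∈ Finset.range n, hi j :=
      Finset.sum_le_sum fun j _ => h j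
    -- the last entry `c` is the least one leaving an attainable sum for the others
    obtain ⟨c, hc1, hc2, hc3, hc4, hc5⟩ : ∃ c, lo n ≤ c ∧ c ≤ hi n ∧
        ∑ j ∈ Finset.range n, lo j ≤ t - c ∧ t - c ≤ ∑ j ∈ Finset.range n, hi j ∧ c ≤ t :=
      ⟨max (lo n) (t - ∑ j ∈ Finset.range n, hi j), by omega, by omega, by omega, by omega,
        by omega⟩
    obtain ⟨q, hq, hqs⟩ := ih (t - c) hc3 hc4
    refine ⟨fun j => if j = n then c else q j, ?_, ?_⟩
    · intro j
      dsimp only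
      split_ifs with hj
      · subst hj; exact ⟨hc1, hc2⟩
      · exact hq j
    · rw [Finset.sum_range_succ, if_pos rfl, Finset.sum_congr rfl (g := q), hqs]
      · omega
      · intro j hj
        rw [if_neg (by have := Finset.mem_range.mp hj; omega)]

/-- Numbers `q_j` of boxes to remove from the rows so that `n - i` boxes are removed in total,
none from the rows beyond the first `n - i`, and at least one from every nonempty row among
these. -/
lemma IsPartition.exists_removal {n : ℕ} {l : ℕ → ℕ} (hl : IsPartition n l) {i : ℕ}
    (hin : i < n) :
    ∃ q : ℕ → ℕ, (∀ j, q j ≤ l j) ∧ (∀ j, n - i ≤ j → q j = 0) ∧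
      (∀ j < n - i, 0 < l j → 1 ≤ q j) ∧ ∑ j ∈ Finset.range (n - i), q j = n - i := by
  obtain ⟨q, hq, hs⟩ := exists_between_with_sum (n - i)
    (fun j => if j < n - i then min 1 (l j) else 0) (fun j => if j < n - i then l j else 0)
    (by intro j; split_ifs <;> omega) (n - i)
    (by
      calc _ ≤ ∑ j ∈ Finset.range (n - i), 1 := Finset.sum_le_sum fun j _ => by
            split_ifs <;> omega
        _ = n - i := by simp)
    (by
      rw [Finset.sum_congr rfl fun j hj => if_pos (Finset.mem_range.mp hj)]
      exact hl.le_head hin)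
  refine ⟨q, fun j => ?_, fun j hj => ?_, fun j hj h0 => ?_, hs⟩
  · have := (hq j).2
    split_ifs at this <;> omega
  · have := (hq j).2
    rw [if_neg (by omega)] at this
    omega
  · have := (hq j).1
    rw [if_pos hj] at this
    omega

/-- A numbering of the boxes in which the boxes not removed come first. -/
lemma exists_numbering {n : ℕ} {l q : ℕ → ℕ} (hl : IsPartition n l) {i : ℕ} (hin : i < n)
    (hql : ∀ j, q j ≤ l j) (hq : ∑ j ∈ Finset.range n, q j = n - i) :
    ∃ e : boxes n l ≃ Fin n, ∀ x, (e x).val < i ↔ q x.1.1 ≤ x.1.2 := by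
  classical
  have hcard : Fintype.card (boxes n l) = n := by
    rw [Fintype.card_coe, boxes, Finset.card_sigma]
    simpa using hl.2.2
  have hc1 : Fintype.card {x : boxes n l // q x.1.1 ≤ x.1.2} = i := by
    have h (x : Σ _ : ℕ, ℕ) : (x ∈ boxes n l ∧ q x.1 ≤ x.2) ↔
        x ∈ (Finset.range n).sigma fun j => Finset.Ico (q j) (l j) := by
      simp only [Finset.mem_sigma, Finset.mem_range, Finset.mem_Ico, mem_boxes]
      tauto
    rw [Fintype.card_congr ((Equiv.subtypeSubtypeEquivSubtypeInter (· ∈ boxes n l)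
      (fun x : Σ _ : ℕ, ℕ => q x.1 ≤ x.2)).trans (Equiv.subtypeEquivRight h)),
      Fintype.card_coe, Finset.card_sigma]
    simp only [Nat.card_Ico]
    have h : ∑ j ∈ Finset.range n, (l j - q j) + ∑ j ∈ Finset.range n, q j =
        ∑ j ∈ Finset.range n, l j := by
      rw [← Finset.sum_add_distrib]
      exact Finset.sum_congr rfl fun j _ => by have := hql j; omega
    rw [hl.2.2] at h
    omega
  have hc2 : Fintype.card {a : Fin n // a.val < i} = i := by
    rw [Fintype.card_subtype, Fin.card_filter_val_lt]
    omega
  have e1 : {x : boxes n l // q x.1.1 ≤ x.1.2} ≃ {a : Fin n // a.val < i} :=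
    Fintype.equivOfCardEq (by rw [hc1, hc2])
  have e2 : {x : boxes n l // ¬ q x.1.1 ≤ x.1.2} ≃ {a : Fin n // ¬ a.val < i} :=
    Fintype.equivOfCardEq (by
      rw [Fintype.card_subtype_compl, Fintype.card_subtype_compl, hc1, hc2, hcard,
        Fintype.card_fin])
  refine ⟨(Equiv.sumCompl _).symm.trans ((Equiv.sumCongr e1 e2).trans (Equiv.sumCompl _)), ?_⟩
  intro x
  by_cases h : q x.1.1 ≤ x.1.2
  · rw [Equiv.trans_apply,
      Equiv.sumCompl_symm_apply_of_pos (p := fun x : boxes n l => q x.1.1 ≤ x.1.2) h]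
    exact iff_of_true (e1 ⟨x, h⟩).2 h
  · rw [Equiv.trans_apply,
      Equiv.sumCompl_symm_apply_of_neg (p := fun x : boxes n l => q x.1.1 ≤ x.1.2) h]
    exact iff_of_false (e2 ⟨x, h⟩).2 h

open Module in
/-- There is a nilpotent matrix of Jordan type `λ` whose compression `Y` satisfies
`rank Y^M ≥ d_{λ,i}` for all `M`. -/
lemma exists_compression_rank_ge (k : Type*) [Field k] {n : ℕ} {l : ℕ → ℕ}
    (hl : IsPartition n l) {i : ℕ} (hin : i < n) :
    ∃ X : Matrix (Fin n) (Fin n) k, IsNilpotent X ∧ HasJordanType X l ∧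
      ∀ M, dPart n l i ≤ finrank k (LinearMap.range
        ((X.submatrix (Fin.castLE hin.le) (Fin.castLE hin.le)).toLin' ^ M)) := by
  classical
  obtain ⟨q, hql, hq0, hq1, hqs⟩ := hl.exists_removal hin
  have hqn : ∑ j ∈ Finset.range n, q j = n - i := by
    rw [← Finset.sum_range_add_sum_Ico _ (show n - i ≤ n by omega), hqs,
      Finset.sum_eq_zero fun j hj => hq0 j (Finset.mem_Ico.mp hj).1, add_zero]
  obtain ⟨e, he⟩ := exists_numbering hl hin hql hqn
  set X : Matrix (Fin n) (Fin n) k := (modelMat k n l q).submatrix e.symm e.symm with hX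
  have hpow (m : ℕ) : X ^ m = (modelMat k n l q ^ m).submatrix e.symm e.symm := by
    induction m with
    | zero => simp
    | succ m ih => rw [pow_succ, pow_succ, ih, hX, Matrix.submatrix_mul_equiv]
  refine ⟨X, ⟨n, ?_⟩, ?_, ?_⟩
  · have : shiftMat k n l n = 0 := by
      ext x y
      have hx := mem_boxes.mp x.2
      have : l x.1.1 ≤ n := by
        conv_rhs => rw [← hl.2.2]
        exact Finset.single_le_sum (f := l) (fun _ _ => Nat.zero_le _)
          (Finset.mem_range.mpr hx.1)
      have : ¬ x.1.2 = y.1.2 + n := by omega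
      simp [shiftMat, this]
    rw [hpow, modelMat_pow, this]
    simp
  · intro m
    rw [hpow, Matrix.rank_submatrix, rank_modelMat_pow]
  · intro M
    set Y := X.submatrix (Fin.castLE hin.le) (Fin.castLE hin.le) with hY
    let g : Fin i → boxes n l := fun a => e.symm (Fin.castLE hin.le a)
    have hgq (a : Fin i) : q (g a).1.1 ≤ (g a).1.2 := by
      rw [← he]
      simp [g]
    have hginj : Function.Injective g := e.symm.injective.comp (Fin.castLE_injective _)
    have hgsurj (x : boxes n l) (hx : q x.1.1 ≤ x.1.2) : ∃ a, g a = x := by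
      refine ⟨⟨(e x).val, (he x).mpr hx⟩, ?_⟩
      simp only [g]
      rw [Equiv.symm_apply_eq]
      rfl
    -- the coordinates of the boxes kept in the first `n - i` rows
    set A : Set (Fin i) := {a | (g a).1.1 < n - i} with hA
    have hmem (a : Fin i) (ha : a ∈ A) :
        Pi.single a (1 : k) ∈ LinearMap.range (Y.toLin' ^ M) := by
      induction M generalizing a with
      | zero => exact ⟨Pi.single a 1, by simp⟩
      | succ M ih =>
        have hbox := mem_boxes.mp (g a).2
        obtain ⟨y, hy1, hy2, hy3⟩ := exists_preimage_modelMat k (g a) (hgq a)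
          (hq1 _ ha (by omega))
        obtain ⟨b, rfl⟩ := hgsurj y hy2
        obtain ⟨v, hv⟩ := ih b (by rw [hA, Set.mem_ofPred_eq, hy1]; exact ha)
        refine ⟨v, ?_⟩
        rw [pow_succ', Module.End.mul_apply, hv]
        ext c
        rw [Matrix.toLin'_apply, Matrix.mulVec_single_one, Matrix.col_apply, Pi.single_apply]
        exact (hy3 (g c) (hgq c)).trans (if_congr hginj.eq_iff rfl rfl)
    have hle : Pi.spanSubset k A ≤ LinearMap.range (Y.toLin' ^ M) := by
      rw [Pi.spanSubset, Submodule.span_le]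
      rintro _ ⟨a, ha, rfl⟩
      rw [Pi.basisFun_apply]
      exact hmem a ha
    refine le_trans ?_ (Submodule.finrank_mono hle)
    rw [Pi.dim_spanSubset]
    have hsub : (((Finset.range (n - i)).sigma fun j => Finset.Ico (q j) (l j) :
        Finset (Σ _ : ℕ, ℕ)) : Set (Σ _ : ℕ, ℕ)) ⊆ (fun a => (g a).1) '' A := by
      intro x hx
      simp only [Finset.coe_sigma, Set.mem_sigma_iff, Finset.mem_coe,
        Finset.mem_range, Finset.mem_Ico] at hx
      obtain ⟨a, ha⟩ := hgsurj ⟨x, mem_boxes.mpr ⟨by omega, hx.2.2⟩⟩ hx.2.1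
      exact ⟨a, by rw [hA, Set.mem_ofPred_eq, ha]; exact hx.1, by simp [ha]⟩
    have h1 := (Set.ncard_le_ncard hsub (Set.toFinite _)).trans
      (Set.ncard_image_le (Set.toFinite A))
    rw [Set.ncard_coe_finset, Finset.card_sigma] at h1
    simp only [Nat.card_Ico] at h1
    refine le_trans ?_ h1
    have h : ∑ j ∈ Finset.range (n - i), (l j - q j) + ∑ j ∈ Finset.range (n - i), q j =
        ∑ j ∈ Finset.range (n - i), l j := by
      rw [← Finset.sum_add_distrib]
      exact Finset.sum_congr rfl fun j _ => by have := hql j; omega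
    have h2 := hl.head_add_tail hin
    rw [dPart]
    omega

/-- For a partition `λ` of `n` and `1 ≤ i ≤ n - 1`:
(a) for every nilpotent `n × n` matrix `X` of Jordan type `λ` and every `j` with
`d_{λ,i} < j ≤ i` one has `s_j(X_{≤i,≤i}) = 0`; and
(b) there exists a nilpotent `n × n` matrix `X` of Jordan type `λ` with
`s_{d_{λ,i}}(X_{≤i,≤i}) ≠ 0`. -/
theorem sElem_vanishing_and_nonvanishing {k : Type*} [Field k] (n : ℕ)
    (l : ℕ → ℕ) (hl : IsPartition n l) (i : ℕ) (hi1 : 1 ≤ i) (hin : i < n) :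
    (∀ X : Matrix (Fin n) (Fin n) k, IsNilpotent X → HasJordanType X l →
      ∀ j, dPart n l i < j → j ≤ i →
        sElem (X.submatrix (Fin.castLE hin.le) (Fin.castLE hin.le)) j = 0) ∧
    (∃ X : Matrix (Fin n) (Fin n) k, IsNilpotent X ∧ HasJordanType X l ∧
      sElem (X.submatrix (Fin.castLE hin.le) (Fin.castLE hin.le)) (dPart n l i) ≠ 0) := by
  have htail : ∑ j ∈ Finset.Ico (n - i) n, l j ≤ i := by
    have h1 := hl.head_add_tail hin
    have h2 := hl.le_head hin
    omega
  constructor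
  · intro X hX hJ j hj hji
    have h := tail_le_natTrailingDegree hl hin X hX hJ
    rw [dPart] at hj
    rw [sElem, Polynomial.coeff_eq_zero_of_lt_natTrailingDegree (by omega), mul_zero]
  · obtain ⟨X, hX, hJ, hrank⟩ := exists_compression_rank_ge k hl hin
    refine ⟨X, hX, hJ, ?_⟩
    have h := tail_le_natTrailingDegree hl hin X hX hJ
    set Y := X.submatrix (Fin.castLE hin.le) (Fin.castLE hin.le)
    obtain ⟨M, hM⟩ := (natTrailingDegree_charpoly_eq Y 0).2
    have hM' := hrank M
    have hd : i - dPart n l i = Y.charpoly.natTrailingDegree := by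
      rw [dPart] at hM' ⊢
      omega
    rw [sElem, hd]
    refine mul_ne_zero (pow_ne_zero _ (neg_ne_zero.mpr one_ne_zero)) ?_
    exact Polynomial.trailingCoeff_nonzero_iff_nonzero.mpr Y.charpoly_monic.ne_zero
end

section
/- Let ν = (ν_1,…,ν_s) be a composition of n, let λ be the conjugate (transpose) partition of the weakly decreasing rearrangement of ν, and let 1 ≤ i ≤ n−1. Then the number of r ∈ {1,…,i} such that r and r + (n−i) lie in different blocks of ν equals d_{λ,i} = i − Σ_{j=n−i+1}^{n} λ_j. (This number is the number of nonzero positions on the (n−i)-th upper codiagonal of the block strictly upper triangular matrices determined by ν.) -/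
/-- Positions `0, …, n-1` are grouped into consecutive blocks of sizes `ν 0, …, ν (s-1)`.
`SameBlock ν s r c` means positions `r` and `c` lie in the same block. -/
def SameBlock (ν : ℕ → ℕ) (s : ℕ) (r c : ℕ) : Prop :=
  ∃ t < s, (∑ u ∈ Finset.range t, ν u) ≤ r ∧ r < (∑ u ∈ Finset.range (t + 1), ν u) ∧
    (∑ u ∈ Finset.range t, ν u) ≤ c ∧ c < (∑ u ∈ Finset.range (t + 1), ν u)

/-- The conjugate (transpose) partition of the weakly decreasing rearrangement of the
composition `(ν 0, …, ν (s-1))`: its `0`-indexed `j`-th part is `#{t < s | ν t ≥ j + 1}`. -/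
def conjOf (ν : ℕ → ℕ) (s : ℕ) : ℕ → ℕ :=
  fun j => ((Finset.range s).filter (fun t => j + 1 ≤ ν t)).card

/-- The tail sum of the conjugate partition, by double counting of the cells `(t, j)` with
`k ≤ j < ν t`. -/
lemma sum_conjOf_Ico (ν : ℕ → ℕ) (s n k : ℕ) (hle : ∀ t < s, ν t ≤ n) :
    ∑ j ∈ Finset.Ico k n, conjOf ν s j = ∑ t ∈ Finset.range s, (ν t - k) := by
  simp only [conjOf, Finset.card_filter]
  rw [Finset.sum_comm]
  refine Finset.sum_congr rfl fun t ht => ?_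
  have hfilter : (Finset.Ico k n).filter (fun j => j + 1 ≤ ν t) = Finset.Ico k (ν t) := by
    ext j
    have := hle t (Finset.mem_range.1 ht)
    simp only [Finset.mem_filter, Finset.mem_Ico]
    omega
  rw [← Finset.card_filter, hfilter, Nat.card_Ico]

/-- The positions `r` such that `r` and `r + k` both lie in block `t`. -/
def blockInterval (ν : ℕ → ℕ) (k t : ℕ) : Finset ℕ :=
  Finset.Ico (∑ u ∈ Finset.range t, ν u) (∑ u ∈ Finset.range (t + 1), ν u - k)

lemma sum_range_mono (ν : ℕ → ℕ) : Monotone fun t => ∑ u ∈ Finset.range t, ν u :=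
  monotone_nat_of_le_succ fun t => by simp [Finset.sum_range_succ]

lemma card_biUnion_block (ν : ℕ → ℕ) (s k : ℕ) :
    ((Finset.range s).biUnion (blockInterval ν k)).card = ∑ t ∈ Finset.range s, (ν t - k) := by
  rw [Finset.card_biUnion]
  · refine Finset.sum_congr rfl fun t _ => ?_
    rw [blockInterval, Nat.card_Ico, Finset.sum_range_succ]
    omega
  · intro t _ t' _ hne
    rw [Function.onFun, Finset.disjoint_left]
    intro r hr hr'
    simp only [blockInterval, Finset.mem_Ico] at hr hr'
    rcases Nat.lt_or_gt_of_ne hne with h | h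
    · have := sum_range_mono ν (Nat.succ_le_of_lt h)
      simp only [Nat.succ_eq_add_one] at this
      omega
    · have := sum_range_mono ν (Nat.succ_le_of_lt h)
      simp only [Nat.succ_eq_add_one] at this
      omega

lemma sameBlock_add_iff (ν : ℕ → ℕ) (s k r : ℕ) :
    SameBlock ν s r (r + k) ↔ r ∈ (Finset.range s).biUnion (blockInterval ν k) := by
  simp only [SameBlock, Finset.mem_biUnion, Finset.mem_range, blockInterval, Finset.mem_Ico]
  refine exists_congr fun t => and_congr_right fun _ => ?_
  omega

/-- Let `ν` be a composition of `n` (positions `0, …, n-1` grouped into consecutive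
blocks of sizes `ν 0, …, ν (s-1)`), `λ` the conjugate of its weakly decreasing rearrangement,
and `1 ≤ i ≤ n - 1`. The number of `r` among the first `i` positions such that `r` and
`r + (n - i)` lie in different blocks of `ν` (the number of nonzero positions on the
`(n-i)`-th upper codiagonal of the block strictly upper triangular matrices determined
by `ν`) equals `d_{λ,i}`. -/
theorem card_codiagonal_eq_dPart (n s : ℕ) (ν : ℕ → ℕ) (hν : ∀ t < s, 0 < ν t)
    (hsum : ∑ t ∈ Finset.range s, ν t = n) (i : ℕ) (hi1 : 1 ≤ i) (hin : i < n) :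
    {r : ℕ | r < i ∧ ¬ SameBlock ν s r (r + (n - i))}.ncard = dPart n (conjOf ν s) i := by
  have hle : ∀ t < s, ν t ≤ n := fun t ht =>
    hsum ▸ Finset.single_le_sum (fun _ _ => Nat.zero_le _) (Finset.mem_range.2 ht)
  have hsub : (Finset.range s).biUnion (blockInterval ν (n - i)) ⊆ Finset.range i := by
    intro r hr
    obtain ⟨t, ht, hr⟩ := Finset.mem_biUnion.1 hr
    have := sum_range_mono ν (Nat.succ_le_of_lt (Finset.mem_range.1 ht))
    simp only [Nat.succ_eq_add_one, hsum] at this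
    simp only [blockInterval, Finset.mem_Ico] at hr
    rw [Finset.mem_range]
    omega
  have hset : {r : ℕ | r < i ∧ ¬ SameBlock ν s r (r + (n - i))} =
      ↑(Finset.range i \ (Finset.range s).biUnion (blockInterval ν (n - i))) := by
    ext r
    rw [Set.mem_ofPred_eq, sameBlock_add_iff, Finset.mem_coe, Finset.mem_sdiff, Finset.mem_range]
  rw [hset, Set.ncard_coe_finset, Finset.card_sdiff_of_subset hsub, card_biUnion_block,
    Finset.card_range, dPart, sum_conjOf_Ico ν s n (n - i) hle]
end

section
/- Let k be a field, let X be a nilpotent endomorphism of a finite-dimensional k-vector space V with Jordan type λ, and let v be a nonzero vector in the kernel of X. Then the Jordan type of the endomorphism of V/kv induced by X is the weakly decreasing rearrangement of the sequence obtained from λ by decreasing exactly one nonzero part of λ by 1. -/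
section LinearAlgebra

variable {k V W : Type*} [Field k] [AddCommGroup V] [Module k V] [AddCommGroup W] [Module k W]

/-- Rank-nullity for the restriction of `f` to `p`. -/
lemma finrank_map_add_finrank_inf_ker_s11 [FiniteDimensional k V] (f : V →ₗ[k] W)
    (p : Submodule k V) :
    Module.finrank k (p.map f) + Module.finrank k (p ⊓ LinearMap.ker f : Submodule k V) =
      Module.finrank k p := by
  have h := (f.domRestrict p).finrank_range_add_finrank_ker
  rw [LinearMap.range_domRestrict, LinearMap.ker_domRestrict] at h
  rw [← h, ← Submodule.map_comap_subtype]
  congr 1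
  exact ((p.subtype.ker_eq_bot.1 p.ker_subtype |>
    Submodule.equivMapOfInjective p.subtype) _).symm.finrank_eq

lemma range_mapQ_pow (X : V →ₗ[k] V) (p : Submodule k V) (hp : p ≤ p.comap X) (m : ℕ) :
    LinearMap.range ((p.mapQ p X hp) ^ m) = (LinearMap.range (X ^ m)).map p.mkQ := by
  rw [← Submodule.mapQ_pow, Submodule.range_mapQ]

lemma range_pow_antitone (X : V →ₗ[k] V) {a b : ℕ} (hab : a ≤ b) :
    LinearMap.range (X ^ b) ≤ LinearMap.range (X ^ a) := by
  obtain ⟨c, rfl⟩ := Nat.exists_eq_add_of_le hab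
  rw [pow_add]
  exact LinearMap.range_comp_le_range _ _

lemma finrank_range_mapQ_pow [FiniteDimensional k V] (X : V →ₗ[k] V) (v : V) (hv : v ≠ 0)
    (hinv : Submodule.span k {v} ≤ (Submodule.span k {v}).comap X) (m : ℕ)
    [Decidable (v ∈ LinearMap.range (X ^ m))] :
    Module.finrank k (LinearMap.range
      ((Submodule.mapQ (Submodule.span k {v}) (Submodule.span k {v}) X hinv) ^ m)) +
      (if v ∈ LinearMap.range (X ^ m) then 1 else 0) =
      Module.finrank k (LinearMap.range (X ^ m)) := by
  rw [range_mapQ_pow, ← finrank_map_add_finrank_inf_ker_s11 (Submodule.span k {v}).mkQ,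
    Submodule.ker_mkQ]
  congr 1
  split_ifs with h
  · rw [inf_eq_right.2 ((Submodule.span_singleton_le_iff_mem _ _).2 h), finrank_span_singleton hv]
  · rw [inf_comm, ((Submodule.disjoint_span_singleton' hv).2 h).symm.eq_bot, finrank_bot]

/-- Passing from `range (X ^ h)` to `range (X ^ (h + 1))` loses the kernel vector `v`, so the
sequence of ranks is strictly convex at `h + 1`. -/
lemma finrank_range_pow_strict [FiniteDimensional k V] (X : V →ₗ[k] V) (v : V)
    (hXv : X v = 0) (h : ℕ) (h1 : v ∈ LinearMap.range (X ^ h))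
    (h2 : v ∉ LinearMap.range (X ^ (h + 1))) :
    2 * Module.finrank k (LinearMap.range (X ^ (h + 1))) <
      Module.finrank k (LinearMap.range (X ^ h)) +
      Module.finrank k (LinearMap.range (X ^ (h + 2))) := by
  have key (m : ℕ) : Module.finrank k (LinearMap.range (X ^ (m + 1))) +
      Module.finrank k (LinearMap.range (X ^ m) ⊓ LinearMap.ker X : Submodule k V) =
      Module.finrank k (LinearMap.range (X ^ m)) := by
    rw [← finrank_map_add_finrank_inf_ker_s11 X (LinearMap.range (X ^ m)), pow_succ',
      Module.End.mul_eq_comp, LinearMap.range_comp]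
  have hlt : (LinearMap.range (X ^ (h + 1)) ⊓ LinearMap.ker X : Submodule k V) <
      LinearMap.range (X ^ h) ⊓ LinearMap.ker X :=
    lt_of_le_of_ne (inf_le_inf_right _ (range_pow_antitone X (Nat.le_succ h)))
      fun he => h2 (he.ge (Submodule.mem_inf.2 ⟨h1, hXv⟩)).1
  have := Submodule.finrank_lt_finrank_of_lt hlt
  have := key h
  have := key (h + 1)
  rw [show h + 1 + 1 = h + 2 from rfl] at this
  omega

end LinearAlgebra

/-- If `x ≠ h + 1`, the truncated difference `m ↦ x - m` is affine on `{h, h + 1, h + 2}`, so strict convexity of `m ↦ ∑ (l j - m)` at `h + 1` forces a part `h + 1`. -/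
lemma exists_part_eq (n h : ℕ) (l : ℕ → ℕ)
    (H : 2 * ∑ j ∈ Finset.range n, (l j - (h + 1)) <
      ∑ j ∈ Finset.range n, (l j - h) + ∑ j ∈ Finset.range n, (l j - (h + 2))) :
    ∃ j < n, l j = h + 1 := by
  by_contra! hne
  refine H.ne ?_
  rw [Finset.mul_sum, ← Finset.sum_add_distrib]
  refine Finset.sum_congr rfl fun j hj => ?_
  have := hne j (Finset.mem_range.1 hj)
  omega

lemma sum_update_sub (n j₀ h m : ℕ) (l : ℕ → ℕ) (hj : j₀ < n) (hl : l j₀ = h + 1) :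
    ∑ j ∈ Finset.range n, (Function.update l j₀ h j - m) + (if m ≤ h then 1 else 0) =
      ∑ j ∈ Finset.range n, (l j - m) := by
  have hm := Finset.mem_range.2 hj
  rw [← Finset.add_sum_erase _ _ hm, ← Finset.add_sum_erase _ _ hm,
    Finset.sum_congr rfl (g := fun j => l j - m)
      fun j hj => by rw [Function.update_of_ne (Finset.ne_of_mem_erase hj)]]
  rw [Function.update_self, hl]
  split_ifs <;> omega

lemma antitone_update (l : ℕ → ℕ) (hl : Antitone l) (j₀ h : ℕ) (h0 : l j₀ = h + 1)
    (hlast : ∀ j, j₀ < j → l j ≠ h + 1) : Antitone (Function.update l j₀ h) := by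
  intro a b hab
  have h1 := hl hab
  by_cases ha : a = j₀ <;> by_cases hb : b = j₀
  · rw [ha, hb]
  · have := hlast b (by omega)
    subst ha
    rw [Function.update_self, Function.update_of_ne hb]
    omega
  · subst hb
    rw [Function.update_self, Function.update_of_ne ha]
    omega
  · rwa [Function.update_of_ne ha, Function.update_of_ne hb]

/-- Let `X` be a nilpotent endomorphism of a finite-dimensional vector space `V` of Jordan
type `λ` (i.e. `rank (X ^ m) = ∑_j max (λ_j - m) 0` for all `m`), and let `v ≠ 0` with
`X v = 0`. Then the Jordan type of the endomorphism induced by `X` on `V / k v` is the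
weakly decreasing rearrangement `μ` of the sequence obtained from `λ` by decreasing exactly
one nonzero part of `λ` by `1`. -/
theorem jordanType_quotient_by_kernel_vector {k V : Type*} [Field k] [AddCommGroup V]
    [Module k V] [FiniteDimensional k V] (n : ℕ) (hn : Module.finrank k V = n)
    (l : ℕ → ℕ) (hl : IsPartition n l)
    (X : V →ₗ[k] V) (hnil : IsNilpotent X)
    (hX : ∀ m : ℕ, Module.finrank k (LinearMap.range (X ^ m)) =
      ∑ j ∈ Finset.range n, (l j - m))
    (v : V) (hv : v ≠ 0) (hXv : X v = 0)
    (hinv : Submodule.span k {v} ≤ (Submodule.span k {v}).comap X) :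
    ∃ (j₀ : ℕ) (μ : ℕ → ℕ), 0 < l j₀ ∧ IsPartition (n - 1) μ ∧
      (Finset.range n).val.map μ =
        (Finset.range n).val.map (Function.update l j₀ (l j₀ - 1)) ∧
      ∀ m : ℕ, Module.finrank k (LinearMap.range
          ((Submodule.mapQ (Submodule.span k {v}) (Submodule.span k {v}) X hinv) ^ m)) =
        ∑ j ∈ Finset.range n, (μ j - m) := by
  classical
  obtain ⟨N, hN⟩ := hnil
  have hex : ∃ m, v ∉ LinearMap.range (X ^ m) := ⟨N, by simpa [hN] using hv⟩
  obtain ⟨h, hh⟩ : ∃ h, Nat.find hex = h + 1 :=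
    Nat.exists_eq_succ_of_ne_zero fun h0 => Nat.find_spec hex (by rw [h0]; simp)
  -- `h` is the largest exponent with `v ∈ range (X ^ h)`
  have hmem (m : ℕ) : v ∈ LinearMap.range (X ^ m) ↔ m ≤ h := by
    constructor
    · intro hm
      by_contra hlt
      exact hh ▸ Nat.find_spec hex <| range_pow_antitone X (by omega) hm
    · intro hm
      exact not_not.1 (Nat.find_min hex (by omega))
  have hstrict := finrank_range_pow_strict X v hXv h ((hmem h).2 le_rfl) (by simp [hmem])
  rw [hX, hX, hX] at hstrict
  have hpart := exists_part_eq n h l hstrict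
  -- the last part equal to `h + 1`, so that decreasing it preserves monotonicity
  obtain ⟨j₀, ⟨hj₀, hlj₀⟩, hlast⟩ : ∃ j₀, (j₀ < n ∧ l j₀ = h + 1) ∧
      ∀ j, j₀ < j → l j ≠ h + 1 := by
    obtain ⟨j, hj, hlj⟩ := hpart
    refine ⟨Nat.findGreatest (fun j => j < n ∧ l j = h + 1) n,
      Nat.findGreatest_spec (P := fun j => j < n ∧ l j = h + 1) hj.le ⟨hj, hlj⟩,
      fun i hi hli => ?_⟩
    have hin : i < n := by
      by_contra hge
      have := hl.2.1 i (by omega)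
      omega
    exact Nat.findGreatest_is_greatest hi hin.le ⟨hin, hli⟩
  have hanti := antitone_update l hl.1 j₀ h hlj₀ hlast
  have hsum : ∑ j ∈ Finset.range n, Function.update l j₀ h j + 1 = n := by
    simpa [hl.2.2] using sum_update_sub n j₀ h 0 l hj₀ hlj₀
  -- if the part at index `n - 1` were positive, the `n` leading parts would sum to at least `n`
  have hzero : Function.update l j₀ h (n - 1) = 0 := by
    by_contra hne
    have : ∑ j ∈ Finset.range n, 1 ≤ ∑ j ∈ Finset.range n, Function.update l j₀ h j :=
      Finset.sum_le_sum fun j hj => (Nat.one_le_iff_ne_zero.2 hne).trans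
        (hanti (by have := Finset.mem_range.1 hj; omega))
    simp only [Finset.sum_const, Finset.card_range, smul_eq_mul, mul_one] at this
    omega
  refine ⟨j₀, Function.update l j₀ h, by omega, ⟨hanti, fun j hj => ?_, ?_⟩, ?_, fun m => ?_⟩
  · exact Nat.le_zero.1 (hzero ▸ hanti hj)
  · obtain ⟨n', rfl⟩ : ∃ n', n = n' + 1 := ⟨n - 1, by omega⟩
    rw [Finset.sum_range_succ] at hsum
    simp only [Nat.add_sub_cancel] at hzero ⊢
    omega
  · rw [hlj₀, Nat.add_sub_cancel]
  · have h1 := finrank_range_mapQ_pow X v hv hinv m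
    have h2 := sum_update_sub n j₀ h m l hj₀ hlj₀
    rw [hX] at h1
    simp only [hmem] at h1
    omega
end
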